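/- arXiv:1808.08708 — 2 statements merged into one kernel-verified Lean document; each statement's English description precedes it below -/
import Mathlib

section
/- Let G be a unique product group and let C be a finite subset of G containing the identity element such that the subgroup ⟨C⟩ generated by C is not abelian. Then for every finite subset B of G with |B| ≥ 7, one has |BC| ≥ |B| + |C| + 2. -/
open Pointwise

/-!
Removing the factors of a unique product from `B` one at a time does not increase `|BC| - |B|`
(`exists_subset_card`), so it suffices to prove `|BC| ≥ |C| + 9` when `|B| = 7`. The same removal
applied to `C` gives an induction on `|C|` (`card_mul_ge_of_card_eq_seven`), which works with the
translation-invariant hypothesis that the quotients of elements of `C` do not all commute. Two cases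
remain: either `|C| = 3`, or `C` is a translate of `A ∪ {c}`, where `A` contains `1`, has at least
three pairwise commuting elements, and `c` does not commute with all of `A`.

For `C = A ∪ {c}` and `H = ⟨A⟩`, the elements of `BC \ BA` correspond to the `b ∈ B` with `bc ∉ BA`.
If `B` lies in one coset of `H`, all seven elements of `B` count (`one_coset`). If `B` meets exactly
two cosets, comparison of `H` with its conjugate by `c` bounds the number of exceptions
(`two_cosets`); the bound `|BA| ≥ |B| + |A| - 1` and its equality case
(`subset_zpowers_of_card_le`) finish this case. If `B` meets three cosets and `|A| ≥ 3`, then `BA`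
alone is large enough (`card_mul_insert_ge`).

Let finally `C = {1, x, y}` with `xy ≠ yx`. If each of `B ∪ Bx`, `B ∪ By`, `Bx ∪ By` has at least
eleven elements, inclusion-exclusion gives `|BC| ≥ 12`. Otherwise one may assume
`|B ∪ Bx| ≤ 10` after a translation, and by the above that `B` meets three cosets of `⟨x⟩`. Then `B`
is a union of exactly three progressions `e xʲ`, `j < p`, of ratio `x` in distinct cosets, called
lines below, and `|B ∪ Bx| = 10`. It has to be shown that right multiplication by `y` sends at most
five elements of `B` into `B ∪ Bx` (`lines_bound`). Such elements are recorded by relations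
`u xʲ y = v xˡ` between lines. Two relations between the same lines in the same direction give
`xᵃ y = y xᵇ`; two in opposite directions give `y xᵐ y = xⁿ`; and three around a triangle give
`y xᵖ y x^q y = xʳ`. Since the group is torsion-free and `x`, `y` do not commute, these relations
restrict each other, and six relations are impossible. The cases are: `y⁻¹ x y ∈ ⟨x⟩`; no relation
`y xᵐ y = xⁿ`; and, in its presence, `x²` commutes with `y` or not.
-/

namespace UPG

/-! ### Torsion-freeness and removal of points -/

theorem exists_last {α : Type*} {f : ℕ → α} (hf : Function.Injective f) {A : Finset α}
    (h0 : f 0 ∈ A) : ∃ n, f n ∈ A ∧ f (n + 1) ∉ A := by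
  by_contra! h
  have hall : ∀ n, f n ∈ A := fun n ↦ by
    induction n with
    | zero => exact h0
    | succ n ih => exact h n ih
  exact Set.infinite_of_injective_forall_mem hf hall A.finite_toSet

variable {G : Type*} [Group G]

/-- A unique product group is torsion-free: a finite cyclic subgroup has no unique products. -/
theorem eq_one_of_zpow_eq_one [UniqueProds G] {g : G} {n : ℤ} (hn : n ≠ 0) (h : g ^ n = 1) :
    g = 1 := by
  classical
  have hfin : (Subgroup.zpowers g : Set G).Finite :=
    Set.finite_coe_iff.1 (isOfFinOrder_iff_zpow_eq_one.2 ⟨n, hn, h⟩ : IsOfFinOrder g).finite_zpowers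
  have hne : hfin.toFinset.Nonempty := ⟨1, by simp⟩
  obtain ⟨a, ha, b, hb, hab⟩ := UniqueProds.uniqueMul_of_nonempty hne hne
  rw [Set.Finite.mem_toFinset] at ha hb
  have hg := Subgroup.mem_zpowers g
  have := (hab (a := a * g) (b := g⁻¹ * b)
    ((Set.Finite.mem_toFinset _).2 (Subgroup.mul_mem _ ha hg))
    ((Set.Finite.mem_toFinset _).2 (Subgroup.mul_mem _ (Subgroup.inv_mem _ hg) hb)) (by group)).1
  simpa using this

theorem zpow_inj [UniqueProds G] {g : G} (hg : g ≠ 1) {m n : ℤ} (h : g ^ m = g ^ n) : m = n := by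
  by_contra hne
  exact hg (eq_one_of_zpow_eq_one (sub_ne_zero.2 hne) (by rw [zpow_sub, h, mul_inv_cancel]))

theorem eq_of_zpow_eq_of_commute [UniqueProds G] {a b : G} {n : ℤ} (hn : n ≠ 0)
    (hab : Commute a b) (h : a ^ n = b ^ n) : a = b := by
  have : (a * b⁻¹) ^ n = 1 := by
    rw [hab.inv_right.mul_zpow, h, inv_zpow, mul_inv_cancel]
  exact mul_inv_eq_one.1 (eq_one_of_zpow_eq_one hn this)

variable [DecidableEq G]

/-- The two factors of a unique product can be removed, each with a loss of at least one point. -/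
theorem exists_erase [UniqueProds G] {B C : Finset G} (hB : B.Nonempty) (hC : C.Nonempty) :
    ∃ b ∈ B, ∃ c ∈ C, (B.erase b * C).card + 1 ≤ (B * C).card ∧
      (B * C.erase c).card + 1 ≤ (B * C).card := by
  obtain ⟨b, hb, c, hc, hu⟩ := UniqueProds.uniqueMul_of_nonempty hB hC
  refine ⟨b, hb, c, hc, ?_, ?_⟩
  · refine Finset.card_lt_card ((Finset.ssubset_iff_of_subset
      (Finset.mul_subset_mul_right (Finset.erase_subset _ _))).2
        ⟨b * c, Finset.mul_mem_mul hb hc, fun h ↦ ?_⟩)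
    obtain ⟨u, hu', v, hv, huv⟩ := Finset.mem_mul.1 h
    exact (Finset.mem_erase.1 hu').1 (hu (Finset.mem_erase.1 hu').2 hv huv).1
  · refine Finset.card_lt_card ((Finset.ssubset_iff_of_subset
      (Finset.mul_subset_mul_left (Finset.erase_subset _ _))).2
        ⟨b * c, Finset.mul_mem_mul hb hc, fun h ↦ ?_⟩)
    obtain ⟨u, hu', v, hv, huv⟩ := Finset.mem_mul.1 h
    exact (Finset.mem_erase.1 hv).1 (hu hu' (Finset.mem_erase.1 hv).2 huv).2

/-- `B` can be shrunk to any size `k` without increasing `|BC| - |B|`. -/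
theorem exists_subset_card [UniqueProds G] {B C : Finset G} (hC : C.Nonempty) {k : ℕ}
    (hk : k ≤ B.card) :
    ∃ B' ⊆ B, B'.card = k ∧ (B' * C).card + B.card ≤ (B * C).card + k := by
  induction hn : B.card - k generalizing B with
  | zero => exact ⟨B, subset_rfl, by omega, by omega⟩
  | succ n ih =>
    obtain ⟨b, hb, -, -, h, -⟩ := exists_erase (B := B) (Finset.card_pos.1 (by omega)) hC
    have hcard := Finset.card_erase_of_mem hb
    obtain ⟨B', hs, h1, h2⟩ := ih (B := B.erase b) (by omega) (by omega)
    exact ⟨B', hs.trans (Finset.erase_subset _ _), h1, by omega⟩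

theorem card_add_card_le [UniqueProds G] {B C : Finset G} (hB : B.Nonempty) (hC : C.Nonempty) :
    B.card + C.card ≤ (B * C).card + 1 := by
  obtain ⟨B', -, h1, h2⟩ := exists_subset_card hC (Finset.card_pos.2 hB)
  obtain ⟨b, rfl⟩ := Finset.card_eq_one.1 h1
  simp at h2
  omega

/-- Equality in `card_add_card_le`, for a set `B` with at least two elements, forces `A` into a
cyclic subgroup: shrinking `B` to a pair `{u, v}` shows that `A` is a progression of ratio
`u⁻¹v`. -/
theorem subset_zpowers_of_card_le [UniqueProds G] {B A : Finset G} (h1 : (1 : G) ∈ A)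
    (hB : 2 ≤ B.card) (h : (B * A).card + 1 ≤ B.card + A.card) :
    ∃ g : G, ∀ a ∈ A, a ∈ Subgroup.zpowers g := by
  obtain ⟨B', -, hB', h2⟩ := exists_subset_card ⟨1, h1⟩ hB
  obtain ⟨u, v, huv, rfl⟩ := Finset.card_eq_two.1 hB'
  set g := u⁻¹ * v with hg
  have hg1 : g ≠ 1 := fun h ↦ huv (inv_mul_eq_one.1 h)
  have hle : (A ∪ A.image (g * ·)).card ≤ A.card + 1 := by
    have : ({u, v} * A : Finset G) = (A ∪ A.image (g * ·)).image (u * ·) := by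
      ext w
      simp only [Finset.mem_mul, Finset.mem_insert, Finset.mem_singleton, Finset.mem_image,
        Finset.mem_union, hg]
      constructor
      · rintro ⟨y, rfl | rfl, z, hz, rfl⟩
        · exact ⟨z, Or.inl hz, rfl⟩
        · exact ⟨u⁻¹ * y * z, Or.inr ⟨z, hz, rfl⟩, by group⟩
      · rintro ⟨w, hw | ⟨z, hz, rfl⟩, rfl⟩
        · exact ⟨u, Or.inl rfl, w, hw, rfl⟩
        · exact ⟨v, Or.inr rfl, z, hz, by group⟩
    rw [this, Finset.card_image_of_injective _ (mul_right_injective u)] at h2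
    omega
  have hd : (A.image (g * ·) \ A).card ≤ 1 := by
    have := Finset.card_sdiff_add_card (A.image (g * ·)) A
    rw [Finset.union_comm] at this
    omega
  -- Following the ratio `g` from any point of `A` leads to the single point of `gA \ A`.
  have key : ∀ a ∈ A, ∃ n : ℕ, g ^ (n + 1) * a ∈ A.image (g * ·) \ A := by
    intro a ha
    obtain ⟨n, hn, hn'⟩ := exists_last (f := fun n : ℕ ↦ g ^ n * a) (A := A)
      (fun m n hmn ↦ by
        have := zpow_inj hg1 (m := m) (n := n) (by simpa using hmn)
        exact_mod_cast this) (by simpa using ha)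
    exact ⟨n, Finset.mem_sdiff.2 ⟨Finset.mem_image.2 ⟨_, hn, by simp [pow_succ', mul_assoc]⟩, hn'⟩⟩
  refine ⟨g, fun a ha ↦ ?_⟩
  obtain ⟨n, hn⟩ := key a ha
  obtain ⟨m, hm⟩ := key 1 h1
  have := Finset.card_le_one.1 hd _ hn _ hm
  have h3 : a = (g ^ (n + 1))⁻¹ * g ^ (m + 1) := by
    rw [eq_inv_mul_iff_mul_eq, this, mul_one]
  rw [h3]
  exact Subgroup.mul_mem _ (Subgroup.inv_mem _ (Subgroup.pow_mem _ (Subgroup.mem_zpowers g) _))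
    (Subgroup.pow_mem _ (Subgroup.mem_zpowers g) _)

theorem card_mul_insert (B A : Finset G) (c : G) :
    (B * insert c A).card = (B * A).card + (B.filter (fun b ↦ b * c ∉ B * A)).card := by
  have : B * insert c A = (B * A) ∪ (B.filter (fun b ↦ b * c ∉ B * A)).image (· * c) := by
    ext w
    simp only [Finset.mem_mul, Finset.mem_insert, Finset.mem_union, Finset.mem_image,
      Finset.mem_filter]
    constructor
    · rintro ⟨b, hb, z, rfl | hz, rfl⟩
      · by_cases h : ∃ y ∈ B, ∃ z' ∈ A, y * z' = b * z
        · exact Or.inl h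
        · exact Or.inr ⟨b, ⟨hb, h⟩, rfl⟩
      · exact Or.inl ⟨b, hb, z, hz, rfl⟩
    · rintro (⟨b, hb, z, hz, rfl⟩ | ⟨b, ⟨hb, -⟩, rfl⟩)
      · exact ⟨b, hb, z, Or.inr hz, rfl⟩
      · exact ⟨b, hb, c, Or.inl rfl, rfl⟩
  rw [this, Finset.card_union_of_disjoint, Finset.card_image_of_injective _ (mul_left_injective c)]
  refine Finset.disjoint_left.2 fun w hw hw' ↦ ?_
  obtain ⟨b, hb, rfl⟩ := Finset.mem_image.1 hw'
  exact (Finset.mem_filter.1 hb).2 hw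


/-! ### A commutative set and one further element: one or two cosets -/

omit [DecidableEq G] in
theorem closure_commute {A : Set G} (hA : ∀ u ∈ A, ∀ v ∈ A, u * v = v * u) {g h : G}
    (hg : g ∈ Subgroup.closure A) (hh : h ∈ Subgroup.closure A) : Commute g h := by
  have h1 : Subgroup.closure A ≤ Subgroup.centralizer A :=
    (Subgroup.closure_le _).2 fun u hu ↦ Subgroup.mem_centralizer_iff.2 fun v hv ↦ hA v hv u hu
  exact (Subgroup.mem_centralizer_iff.1 (Subgroup.closure_le_centralizer_centralizer A hg) h
    (h1 hh)).symm

/-- If `cHc⁻¹` misses some element `a` of `A`, then a part `S` of `B` inside one left coset of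
`cHc⁻¹` is disjoint from its translate `Sa`, and both lie in `BA`. -/
theorem two_mul_card_le {A B S : Finset G} {H : Subgroup G} {c a : G} (h1 : (1 : G) ∈ A)
    (hS : S ⊆ B) (hSH : ∀ b ∈ S, ∀ b' ∈ S, c⁻¹ * (b⁻¹ * b') * c ∈ H) (ha : a ∈ A)
    (hac : c⁻¹ * a * c ∉ H) : 2 * S.card ≤ (B * A).card := by
  have hd : Disjoint S (S.image (· * a)) := by
    refine Finset.disjoint_left.2 fun w hw hw' ↦ ?_
    obtain ⟨b, hb, rfl⟩ := Finset.mem_image.1 hw'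
    exact hac (by simpa using hSH b hb _ hw)
  have hsub : S ∪ S.image (· * a) ⊆ B * A := by
    refine Finset.union_subset (fun b hb ↦ ?_) (fun w hw ↦ ?_)
    · simpa using Finset.mul_mem_mul (hS hb) h1
    · obtain ⟨b, hb, rfl⟩ := Finset.mem_image.1 hw
      exact Finset.mul_mem_mul (hS hb) ha
  have := Finset.card_le_card hsub
  rw [Finset.card_union_of_disjoint hd, Finset.card_image_of_injective _ (mul_left_injective a)]
    at this
  omega

theorem card_filter_mul_mem_le (B D : Finset G) (c : G) :
    (B.filter (fun b ↦ b * c ∈ D)).card ≤ D.card :=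
  Finset.card_le_card_of_injOn (· * c) (fun b hb ↦ by simpa using (Finset.mem_filter.1 hb).2)
    (mul_left_injective c).injOn

omit [DecidableEq G] in
theorem notMem_closure {A : Finset G} {a c : G} (hA : ∀ u ∈ A, ∀ v ∈ A, u * v = v * u)
    (ha : a ∈ A) (hac : a * c ≠ c * a) : c ∉ Subgroup.closure (A : Set G) := fun h ↦
  hac (closure_commute (A := (A : Set G)) (by simpa using hA) (Subgroup.subset_closure ha) h)

/-- When `B` lies in one coset of `⟨A⟩`, right multiplication by `c` moves all of `B` off `BA`. -/
theorem one_coset [UniqueProds G] {A B : Finset G} {a c : G} (h1 : (1 : G) ∈ A)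
    (hA : ∀ u ∈ A, ∀ v ∈ A, u * v = v * u) (ha : a ∈ A) (hac : a * c ≠ c * a)
    (hB : B.card = 7) (hBH : ∀ b ∈ B, ∀ b' ∈ B, b⁻¹ * b' ∈ Subgroup.closure (A : Set G)) :
    A.card + 10 ≤ (B * insert c A).card := by
  have hc := notMem_closure hA ha hac
  have hcd := card_add_card_le (B := B) (C := A) (Finset.card_pos.1 (by omega)) ⟨1, h1⟩
  rw [card_mul_insert, Finset.filter_true_of_mem]
  · omega
  · intro b hb h
    obtain ⟨b', hb', u, hu, hbu⟩ := Finset.mem_mul.1 h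
    have : c = b⁻¹ * b' * u := by rw [mul_assoc, hbu, inv_mul_cancel_left]
    exact hc (this ▸ Subgroup.mul_mem _ (hBH b hb b' hb') (Subgroup.subset_closure hu))

omit [DecidableEq G] in
/-- If conjugation by `c` maps `A` into the commutative group `H = ⟨A⟩` and `c² ∈ H`, but `c` does
not centralise `A`, then `H` is not cyclic: an element of a cyclic group having a nontrivial power
in common with the `c`-invariant `c²` would be fixed by `c`. -/
theorem not_cyclic [UniqueProds G] {A : Finset G} {a c : G}
    (hA : ∀ u ∈ A, ∀ v ∈ A, u * v = v * u) (ha : a ∈ A) (hac : a * c ≠ c * a)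
    (hconj : ∀ u ∈ A, c⁻¹ * u * c ∈ Subgroup.closure (A : Set G))
    (hc2 : c * c ∈ Subgroup.closure (A : Set G)) :
    ¬ ∃ g : G, ∀ u ∈ A, u ∈ Subgroup.zpowers g := by
  rintro ⟨g, hg⟩
  have hle : Subgroup.closure (A : Set G) ≤ Subgroup.zpowers g := (Subgroup.closure_le _).2 hg
  obtain ⟨i, hi⟩ := Subgroup.mem_zpowers_iff.1 (hle hc2)
  obtain ⟨j, hj⟩ := Subgroup.mem_zpowers_iff.1 (hg a ha)
  have hi0 : i ≠ 0 := by
    rintro rfl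
    have : c = 1 := eq_one_of_zpow_eq_one (n := 2) (by norm_num) (by
      rw [zpow_two, ← hi, zpow_zero])
    exact hac (by simp [this])
  have hpow : a ^ i = (c * c) ^ j := by
    rw [← hi, ← hj, ← zpow_mul, ← zpow_mul, mul_comm]
  have hcomm : Commute (a ^ i) c := by
    rw [hpow]
    exact ((Commute.refl c).mul_left (Commute.refl c)).zpow_left j
  have h1 : (c⁻¹ * a * c) ^ i = a ^ i := by
    have := conj_zpow (i := i) (a := c⁻¹) (b := a)
    rw [inv_inv] at this
    rw [this, mul_assoc, hcomm.eq, inv_mul_cancel_left]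
  have h2 : c⁻¹ * a * c = a := eq_of_zpow_eq_of_commute hi0
    (closure_commute (A := (A : Set G)) (by simpa using hA) (hconj a ha)
      (Subgroup.subset_closure ha)) h1
  apply hac
  rw [mul_assoc, inv_mul_eq_iff_eq_mul] at h2
  exact h2

/-- When `B` meets exactly two cosets of `H = ⟨A⟩`, the points `b` with `bc ∈ BA` are those which
`c` moves from one coset into the other part of `BA`. If `c⁻¹Ac ⊄ H`, at most half as many as the
points of `BA` in either coset can move. If `c⁻¹Ac ⊆ H`, either all moves go in one direction, or
`c² ∈ H` and `H` is not cyclic, which improves the bound on `|BA|`. -/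
theorem two_cosets [UniqueProds G] {A B₁ B₂ : Finset G} {a c : G} (h1 : (1 : G) ∈ A)
    (hA : ∀ u ∈ A, ∀ v ∈ A, u * v = v * u) (ha : a ∈ A) (hac : a * c ≠ c * a)
    (hB : B₁.card + B₂.card = 7) (hne₁ : B₁.Nonempty) (hne₂ : B₂.Nonempty)
    (h₁ : ∀ b ∈ B₁, ∀ b' ∈ B₁, b⁻¹ * b' ∈ Subgroup.closure (A : Set G))
    (h₂ : ∀ b ∈ B₂, ∀ b' ∈ B₂, b⁻¹ * b' ∈ Subgroup.closure (A : Set G))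
    (h₁₂ : ∀ b ∈ B₁, ∀ b' ∈ B₂, b⁻¹ * b' ∉ Subgroup.closure (A : Set G)) :
    A.card + 10 ≤ ((B₁ ∪ B₂) * insert c A).card := by
  set H := Subgroup.closure (A : Set G) with hH
  have hcH : c ∉ H := notMem_closure hA ha hac
  have hAH : ∀ u ∈ A, u ∈ H := fun u hu ↦ Subgroup.subset_closure hu
  have hcom : ∀ g ∈ H, ∀ h ∈ H, g * h = h * g := fun g hg h hh ↦
    closure_commute (A := (A : Set G)) (by simpa using hA) hg hh
  have hA2 : 2 ≤ A.card := by
    refine Finset.one_lt_card.2 ⟨1, h1, a, ha, ?_⟩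
    rintro rfl
    simp at hac
  have hdisj : Disjoint (B₁ * A) (B₂ * A) := by
    refine Finset.disjoint_left.2 fun w hw hw' ↦ ?_
    obtain ⟨b, hb, u, hu, rfl⟩ := Finset.mem_mul.1 hw
    obtain ⟨b', hb', v, hv, hbv⟩ := Finset.mem_mul.1 hw'
    have : b⁻¹ * b' = u * v⁻¹ := by
      rw [inv_mul_eq_iff_eq_mul, ← mul_assoc, ← hbv, mul_inv_cancel_right]
    exact h₁₂ b hb b' hb' (this ▸ H.mul_mem (hAH u hu) (H.inv_mem (hAH v hv)))
  have hcd₁ := card_add_card_le hne₁ ⟨1, h1⟩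
  have hcd₂ := card_add_card_le hne₂ ⟨1, h1⟩
  set bad₁ := B₁.filter (fun b ↦ b * c ∈ B₂ * A) with hbad₁
  set bad₂ := B₂.filter (fun b ↦ b * c ∈ B₁ * A) with hbad₂
  -- Right multiplication by `c ∉ H` never stays in the same coset of `H`.
  have hself : ∀ {D : Finset G}, (∀ b ∈ D, ∀ b' ∈ D, b⁻¹ * b' ∈ H) → ∀ b ∈ D, b * c ∉ D * A := by
    intro D hD b hb h
    obtain ⟨b', hb', u, hu, hbu⟩ := Finset.mem_mul.1 h
    have : c = b⁻¹ * b' * u := by rw [mul_assoc, hbu, inv_mul_cancel_left]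
    exact hcH (this ▸ H.mul_mem (hD b hb b' hb') (hAH u hu))
  have hBd : Disjoint B₁ B₂ := Finset.disjoint_left.2 fun b hb hb' ↦
    h₁₂ b hb b hb' (by simp [H.one_mem])
  have hgood : 7 ≤ ((B₁ ∪ B₂).filter (fun b ↦ b * c ∉ (B₁ ∪ B₂) * A)).card
      + bad₁.card + bad₂.card := by
    have hsub : B₁ ∪ B₂ ⊆ (B₁ ∪ B₂).filter (fun b ↦ b * c ∉ (B₁ ∪ B₂) * A) ∪ bad₁ ∪ bad₂ := by
      intro b hb
      simp only [Finset.union_mul, hbad₁, hbad₂, Finset.mem_union, Finset.mem_filter] at hb ⊢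
      have := hself h₁ b
      have := hself h₂ b
      tauto
    have := Finset.card_le_card hsub
    rw [Finset.card_union_of_disjoint hBd] at this
    have h3 := Finset.card_union_le
      ((B₁ ∪ B₂).filter (fun b ↦ b * c ∉ (B₁ ∪ B₂) * A) ∪ bad₁) bad₂
    have h4 := Finset.card_union_le
      ((B₁ ∪ B₂).filter (fun b ↦ b * c ∉ (B₁ ∪ B₂) * A)) bad₁
    omega
  rw [card_mul_insert]
  have hBA : ((B₁ ∪ B₂) * A).card = (B₁ * A).card + (B₂ * A).card := by
    rw [Finset.union_mul, Finset.card_union_of_disjoint hdisj]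
  have hb1 : bad₁.card ≤ B₁.card := Finset.card_filter_le _ _
  have hb2 : bad₂.card ≤ B₂.card := Finset.card_filter_le _ _
  have hb1' : bad₁.card ≤ (B₂ * A).card := card_filter_mul_mem_le _ _ _
  have hb2' : bad₂.card ≤ (B₁ * A).card := card_filter_mul_mem_le _ _ _
  have hquot : ∀ {D E : Finset G}, (∀ b ∈ E, ∀ b' ∈ E, b⁻¹ * b' ∈ H) →
      ∀ b ∈ D.filter (fun b ↦ b * c ∈ E * A), ∀ b' ∈ D.filter (fun b ↦ b * c ∈ E * A),
      c⁻¹ * (b⁻¹ * b') * c ∈ H := by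
    intro D E hE b hb b' hb'
    obtain ⟨d, hd, u, hu, hdu⟩ := Finset.mem_mul.1 (Finset.mem_filter.1 hb).2
    obtain ⟨d', hd', u', hu', hdu'⟩ := Finset.mem_mul.1 (Finset.mem_filter.1 hb').2
    have : c⁻¹ * (b⁻¹ * b') * c = u⁻¹ * (d⁻¹ * d') * u' := by
      calc _ = (b * c)⁻¹ * (b' * c) := by group
        _ = _ := by rw [← hdu, ← hdu']; group
    rw [this]
    exact H.mul_mem (H.mul_mem (H.inv_mem (hAH u hu)) (hE d hd d' hd')) (hAH u' hu')
  by_cases hconj : ∀ u ∈ A, c⁻¹ * u * c ∈ H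
  · by_cases hz : bad₁.card = 0 ∨ bad₂.card = 0
    · omega
    push Not at hz
    obtain ⟨b, hb⟩ := Finset.card_pos.1 (Nat.pos_of_ne_zero hz.1)
    obtain ⟨b', hb'⟩ := Finset.card_pos.1 (Nat.pos_of_ne_zero hz.2)
    obtain ⟨d, hd, u, hu, hdu⟩ := Finset.mem_mul.1 (Finset.mem_filter.1 hb).2
    obtain ⟨d', hd', u', hu', hdu'⟩ := Finset.mem_mul.1 (Finset.mem_filter.1 hb').2
    have hconjH : ∀ h ∈ H, c⁻¹ * h * c ∈ H := by
      have : H ≤ H.comap (MulAut.conj c⁻¹).toMonoidHom := (Subgroup.closure_le _).2 fun u hu ↦ by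
        simpa using hconj u hu
      intro h hh
      simpa using this hh
    -- An element of `B₁` moved to `B₂A` and one of `B₂` moved to `B₁A` put `c²` into `H`.
    have hc2 : c * c ∈ H := by
      set k := u⁻¹ * (d⁻¹ * b') with hk
      have hkH : k ∈ H := H.mul_mem (H.inv_mem (hAH u hu)) (h₂ d hd b' (Finset.mem_filter.1 hb').1)
      have hckc : c * k * c ∈ H := by
        have : c * k * c = b⁻¹ * d' * u' := by
          have hd2 : d = b * c * u⁻¹ := by rw [← hdu]; group
          rw [mul_assoc b⁻¹, hdu', hk, hd2]
          group
        rw [this]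
        exact H.mul_mem (h₁ b (Finset.mem_filter.1 hb).1 d' hd') (hAH u' hu')
      have : c * c = c * k * c * (c⁻¹ * k * c)⁻¹ := by group
      rw [this]
      exact H.mul_mem hckc (H.inv_mem (hconjH k hkH))
    have hnc := not_cyclic hA ha hac hconj hc2
    have hA3 : 3 ≤ A.card := by
      by_contra hlt
      refine hnc ⟨a, fun v hv ↦ ?_⟩
      by_contra hva
      refine hlt (Finset.two_lt_card.2 ⟨1, h1, a, ha, v, hv, ?_, ?_, ?_⟩)
      · rintro rfl; simp at hac
      · rintro rfl; exact hva (Subgroup.one_mem _)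
      · rintro rfl; exact hva (Subgroup.mem_zpowers _)
    have hs₁ : 2 ≤ B₁.card → B₁.card + A.card ≤ (B₁ * A).card := fun h ↦ by
      by_contra hlt
      exact hnc (subset_zpowers_of_card_le h1 h (by omega))
    have hs₂ : 2 ≤ B₂.card → B₂.card + A.card ≤ (B₂ * A).card := fun h ↦ by
      by_contra hlt
      exact hnc (subset_zpowers_of_card_le h1 h (by omega))
    have hs₁' : B₁.card = 1 → (B₁ * A).card = A.card := fun h ↦ by
      obtain ⟨w, hw⟩ := Finset.card_eq_one.1 h
      simp [hw]
    have hs₂' : B₂.card = 1 → (B₂ * A).card = A.card := fun h ↦ by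
      obtain ⟨w, hw⟩ := Finset.card_eq_one.1 h
      simp [hw]
    have := hne₁.card_pos
    have := hne₂.card_pos
    omega
  · push Not at hconj
    obtain ⟨v, hv, hvc⟩ := hconj
    have e1 : 2 * bad₁.card ≤ (B₁ * A).card :=
      two_mul_card_le h1 (Finset.filter_subset _ _) (hquot h₂) hv hvc
    have e2 : 2 * bad₂.card ≤ (B₂ * A).card :=
      two_mul_card_le h1 (Finset.filter_subset _ _) (hquot h₁) hv hvc
    omega


/-! ### Relations between two noncommuting elements -/

section TwoGenerators

variable {G : Type*} [Group G] {x y : G}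

theorem semi_zpow {a b : ℤ} (h : x ^ a * y = y * x ^ b) (t : ℤ) :
    x ^ (a * t) * y = y * x ^ (b * t) := by
  have h1 : SemiconjBy y (x ^ b) (x ^ a) := h.symm
  have := h1.zpow_right t
  rw [← zpow_mul, ← zpow_mul] at this
  exact this.eq.symm

theorem semi_add {a b c d : ℤ} (h : x ^ a * y = y * x ^ b) (h' : x ^ c * y = y * x ^ d) :
    x ^ (a + c) * y = y * x ^ (b + d) := by
  rw [zpow_add, mul_assoc, h', ← mul_assoc, h, mul_assoc, ← zpow_add]

theorem ne_one_of_not_commute (hxy : x * y ≠ y * x) : x ≠ 1 := by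
  rintro rfl
  simp at hxy

theorem ne_zpow (hxy : x * y ≠ y * x) (t : ℤ) : y ≠ x ^ t := fun h ↦
  hxy (by rw [h, ← zpow_one_add, ← zpow_add_one, add_comm])

/-- If `y xᵐ y = xⁿ`, then `(y xᵐ)² = xᵐ⁺ⁿ` is a nontrivial power of `x` commuting with `y`. -/
theorem flip_commute [UniqueProds G] (hxy : x * y ≠ y * x) {m n : ℤ}
    (h : y * x ^ m * y = x ^ n) :
    m + n ≠ 0 ∧ x ^ (m + n) * y = y * x ^ (m + n) := by
  constructor
  · intro h0
    have h1 : y * x ^ m = 1 := eq_one_of_zpow_eq_one (n := 2) (by norm_num) (by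
      rw [zpow_two, ← mul_assoc, h, ← zpow_add, add_comm, h0, zpow_zero])
    exact ne_zpow hxy (-m) (by rw [zpow_neg]; exact eq_inv_of_mul_eq_one_left h1)
  · have e1 : x ^ (m + n) * y = y * x ^ m * y * (x ^ m * y) := by
      rw [h, add_comm, zpow_add, mul_assoc]
    have e2 : y * x ^ (m + n) = y * x ^ m * (y * x ^ m * y) := by
      rw [h, zpow_add, mul_assoc]
    rw [e1, e2]
    simp only [mul_assoc]

/-- If `y xᵐ y = xⁿ`, then `y` commutes with a nontrivial power of `x`, so a power of `x` conjugated
by `y` into `⟨x⟩` has its exponent unchanged. -/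
theorem semi_diag [UniqueProds G] (hxy : x * y ≠ y * x) {m n : ℤ}
    (h : y * x ^ m * y = x ^ n) {a b : ℤ} (hab : x ^ a * y = y * x ^ b) : a = b := by
  obtain ⟨h0, h1⟩ := flip_commute hxy h
  have e1 := semi_zpow hab (m + n)
  have e2 := semi_zpow h1 a
  rw [mul_comm] at e1
  rw [e2] at e1
  have := zpow_inj (ne_one_of_not_commute hxy) (mul_left_cancel e1)
  rw [mul_comm] at this
  exact mul_right_cancel₀ h0 this

theorem flip_sub {m n m' n' : ℤ} (h : y * x ^ m * y = x ^ n) (h' : y * x ^ m' * y = x ^ n') :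
    x ^ (m' - m) * y = y * x ^ (n' - n) := by
  have e : x ^ m * y = y⁻¹ * x ^ n := by rw [← h]; group
  have e' : x ^ m' * y = y⁻¹ * x ^ n' := by rw [← h']; group
  have e2 : x ^ (-m) * y⁻¹ = y * x ^ (-n) := by
    have := congrArg (·⁻¹) h
    simp only [mul_inv_rev, ← zpow_neg] at this
    rw [← this]; group
  rw [sub_eq_neg_add, zpow_add, mul_assoc, e', ← mul_assoc, e2, mul_assoc, ← zpow_add,
    neg_add_eq_sub]

theorem flip_shift {m n t : ℤ} (h : y * x ^ m * y = x ^ n) (ht : x ^ t * y = y * x ^ t) :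
    y * x ^ (m + t) * y = x ^ (n + t) := by
  rw [zpow_add, ← mul_assoc, mul_assoc, ht, ← mul_assoc, h, zpow_add]

/-- If `y⁻¹ x y = xˡ` and `y xᵖ y x^q y` is a power of `x`, then so is `y³`. As `y³` commutes with
`y`, this forces `l = 1`. -/
theorem no_triangle_of_semi [UniqueProds G] (hxy : x * y ≠ y * x) {l p q r : ℤ}
    (h : x * y = y * x ^ l) (ht : y * x ^ p * y * x ^ q * y = x ^ r) : False := by
  have h' : x ^ (1 : ℤ) * y = y * x ^ l := by simpa using h
  have hp := semi_zpow h' p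
  have hq := semi_zpow h' (l * p + q)
  rw [one_mul] at hp hq
  have e1 : y * y * y * x ^ (l * (l * p + q)) = x ^ r := by
    rw [← ht, mul_assoc (y * y), ← hq, mul_assoc y (x ^ p), hp, zpow_add]
    simp only [mul_assoc]
  have e2 : y ^ (3 : ℤ) = x ^ (r - l * (l * p + q)) := by
    rw [zpow_sub, ← e1]
    have : y ^ (3 : ℤ) = y * y * y := by
      rw [show (3 : ℤ) = 1 + 1 + 1 by norm_num, zpow_add, zpow_add, zpow_one]
    rw [this]; group
  set e := r - l * (l * p + q)
  have he : e ≠ 0 := by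
    intro h0
    rw [h0, zpow_zero] at e2
    exact ne_zpow hxy 0 (by rw [zpow_zero, eq_one_of_zpow_eq_one (by norm_num) e2])
  have hc : x ^ e * y = y * x ^ e := by
    rw [← e2]; group
  have hs := semi_zpow h' e
  rw [one_mul, hc] at hs
  have := zpow_inj (ne_one_of_not_commute hxy) (mul_left_cancel hs)
  have hl : l = 1 := mul_right_cancel₀ he (by rw [one_mul]; exact this.symm)
  rw [hl, zpow_one] at h
  exact hxy h

/-- Let `x²` commute with `w` and let `w²` be a power of `x²`. For even `r` the relation makes
`x w x` an even power of `x`. For odd `r` the group `⟨x, w⟩` is, modulo the central subgroup `⟨x²⟩`,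
a quotient of the dihedral group of order six; then `w x` and its conjugate `x w` have the same
cube, while their product is central, and torsion-freeness gives `x w = w x`. -/
theorem no_dihedral [UniqueProds G] {w : G} (hxw : x * w ≠ w * x) {e r : ℤ}
    (hx : x ^ (2 : ℤ) * w = w * x ^ (2 : ℤ)) (hw : w * w = x ^ (2 * e))
    (h : w * x * w * x * w = x ^ r) : False := by
  have hcen : ∀ t : ℤ, x ^ (2 * t) * w = w * x ^ (2 * t) := semi_zpow hx
  rcases Int.even_or_odd' r with ⟨t, rfl | rfl⟩
  · apply ne_zpow hxw (2 * t - 2 * e - 2)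
    have e1 : w * (x * w * x) * w = w * x ^ (2 * (t - e)) * w := by
      rw [← hcen, mul_assoc _ w w, hw, ← zpow_add, show 2 * (t - e) + 2 * e = 2 * t by ring, ← h]
      simp only [mul_assoc]
    have e2 := mul_left_cancel (mul_right_cancel e1)
    calc w = x⁻¹ * (x * w * x) * x⁻¹ := by group
      _ = x ^ (2 * t - 2 * e - 2) := by
        rw [e2, ← zpow_neg_one, ← zpow_add, ← zpow_add]; congr 1; ring
  · have hgc : ∀ t : ℤ, Commute (x ^ (2 * t)) (w * x) := fun t ↦
      Commute.mul_right (hcen t) ((Commute.refl x).zpow_left _)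
    have hg3 : (w * x) ^ (3 : ℤ) = x ^ (2 * (t + 1)) := by
      have : (w * x) ^ (3 : ℤ) = w * x * w * x * w * x := by
        rw [show (3 : ℤ) = 1 + 1 + 1 by norm_num, zpow_add, zpow_add, zpow_one]
        simp only [mul_assoc]
      rw [this, h, ← zpow_add_one]; congr 1; ring
    have hd : w * x * (x * w) = x ^ (2 * (e + 1)) := by
      calc w * x * (x * w) = w * (x ^ (2 : ℤ) * w) := by rw [zpow_two]; simp only [mul_assoc]
        _ = x ^ (2 * (e + 1)) := by
          rw [hx, ← mul_assoc, hw, ← zpow_add]; congr 1; ring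
    have hh : x * w = (w * x)⁻¹ * x ^ (2 * (e + 1)) := by rw [← hd]; group
    have hh3 : (x * w) ^ (3 : ℤ) = x ^ (2 * (t + 1)) := by
      have e3 : x * w = w⁻¹ * (w * x) * w := by group
      have := conj_zpow (i := 3) (a := w⁻¹) (b := w * x)
      rw [inv_inv] at this
      rw [e3, this, hg3, mul_assoc, hcen, inv_mul_cancel_left]
    rw [hh, (hgc (e + 1)).symm.inv_left.mul_zpow, inv_zpow, hg3, inv_mul_eq_iff_eq_mul,
      ← zpow_mul] at hh3
    have h1 : ((w * x) ^ (2 : ℤ) * (x ^ (2 * (e + 1)))⁻¹) ^ (3 : ℤ) = 1 := by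
      have e4 : ((w * x) ^ (2 : ℤ)) ^ (3 : ℤ) = x ^ (2 * (t + 1)) * x ^ (2 * (t + 1)) := by
        rw [← zpow_mul, mul_comm, zpow_mul, hg3, zpow_two]
      rw [((hgc (e + 1)).symm.zpow_left 2).inv_right.mul_zpow, e4, inv_zpow, ← zpow_mul, hh3,
        mul_inv_cancel]
    have h2 := mul_inv_eq_one.1 (eq_one_of_zpow_eq_one (by norm_num) h1)
    rw [← hd, zpow_two] at h2
    exact hxw (mul_left_cancel h2).symm

/-- When `x²` commutes with `y`, only the parities of `m`, `p`, `q` matter. If `p` or `q` has the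
parity of `m`, the relation `h` shortens `ht` until `y` becomes a power of `x`; otherwise
`no_dihedral` applies to `x` and `y xᵐ`. -/
theorem no_triangle_of_flip [UniqueProds G] (hxy : x * y ≠ y * x)
    (hx : x ^ (2 : ℤ) * y = y * x ^ (2 : ℤ)) {m n p q r : ℤ} (h : y * x ^ m * y = x ^ n)
    (ht : y * x ^ p * y * x ^ q * y = x ^ r) : False := by
  have hcen : ∀ t : ℤ, x ^ (2 * t) * y = y * x ^ (2 * t) := semi_zpow hx
  rcases Int.even_or_odd' (p - m) with ⟨s, hs | hs⟩
  · have := flip_shift h (hcen s)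
    rw [show m + 2 * s = p by omega] at this
    rw [this, ← zpow_add] at ht
    exact ne_zpow hxy (-(n + 2 * s + q) + r) (by rw [zpow_add, ← ht]; group)
  rcases Int.even_or_odd' (q - m) with ⟨t, hqt | hqt⟩
  · have := flip_shift h (hcen t)
    rw [show m + 2 * t = q by omega] at this
    rw [mul_assoc, mul_assoc, ← mul_assoc y (x ^ q), this, mul_assoc, ← zpow_add] at ht
    exact ne_zpow hxy (r + -(p + (n + 2 * t))) (by rw [zpow_add, ← ht]; group)
  obtain ⟨h0, h1⟩ := flip_commute hxy h
  rcases Int.even_or_odd' (m + n) with ⟨e, he | he⟩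
  · refine no_dihedral (x := x) (w := y * x ^ m) (e := e) (r := r + m - 2 * s - 2 * t) ?_ ?_ ?_ ?_
    · intro hc
      apply hxy
      rw [← mul_assoc, mul_assoc y, ← zpow_add_one, add_comm, zpow_one_add, ← mul_assoc] at hc
      exact mul_right_cancel hc
    · rw [← mul_assoc, hx, mul_assoc, mul_assoc, ← zpow_add, ← zpow_add, add_comm]
    · rw [← he, ← mul_assoc, h, ← zpow_add, add_comm]
    · have ep : p = m + 1 + 2 * s := by omega
      have eq : q = m + 1 + 2 * t := by omega
      have e1 : y * x ^ p * y = y * x ^ (m + 1) * y * x ^ (2 * s) := by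
        rw [ep, zpow_add, ← mul_assoc, mul_assoc _ _ y, hcen, ← mul_assoc]
      have e2 : x ^ (2 * s) * x ^ q * y = x ^ (m + 1) * y * x ^ (2 * s + 2 * t) := by
        have := hcen (s + t)
        rw [← mul_add, mul_assoc (x ^ (m + 1)) y, ← this, ← zpow_add, ← mul_assoc, ← zpow_add, eq]
        congr 2; ring
      rw [e1, mul_assoc (y * x ^ (m + 1) * y), mul_assoc (y * x ^ (m + 1) * y), e2] at ht
      have e3 : y * x ^ m * x * (y * x ^ m) * x * (y * x ^ m)
          = y * x ^ (m + 1) * y * (x ^ (m + 1) * y * x ^ (2 * s + 2 * t))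
            * x ^ (m - 2 * s - 2 * t) := by
        rw [zpow_add_one]
        simp only [mul_assoc]
        rw [← zpow_add]
        congr 10; ring
      rw [e3, ht, ← zpow_add]
      congr 1; ring
  · have h2 := semi_add h1 (hcen (-e))
    rw [he] at h2
    rw [show 2 * e + 1 + 2 * -e = 1 by ring, zpow_one] at h2
    exact hxy h2

end TwoGenerators


section Period

variable {G : Type*} [Group G] {x y : G}

/-- If `x³` is the least power of `x` commuting with `y`, every commuting exponent is a multiple
of three. -/
theorem three_dvd (hxy : x * y ≠ y * x) (h2 : x ^ (2 : ℤ) * y ≠ y * x ^ (2 : ℤ))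
    (h3 : x ^ (3 : ℤ) * y = y * x ^ (3 : ℤ)) {t : ℤ} (ht : x ^ t * y = y * x ^ t) : 3 ∣ t := by
  have h := semi_add ht (semi_zpow h3 (-(t / 3)))
  rcases (by omega : t + 3 * -(t / 3) = 0 ∨ t + 3 * -(t / 3) = 1 ∨ t + 3 * -(t / 3) = 2) with
    e | e | e
  · omega
  · rw [e, zpow_one] at h
    exact absurd h hxy
  · rw [e] at h
    exact absurd h h2

theorem flip_mod_six [UniqueProds G] (hxy : x * y ≠ y * x)
    (h2 : x ^ (2 : ℤ) * y ≠ y * x ^ (2 : ℤ)) (h3 : x ^ (3 : ℤ) * y = y * x ^ (3 : ℤ)) {m n : ℤ}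
    (h : y * x ^ m * y = x ^ n) : (m + n) % 6 = 3 := by
  have hd := three_dvd hxy h2 h3 (flip_commute hxy h).2
  by_contra hne
  -- Otherwise `m + n = 6k`, and shifting by the central exponent `3k` makes the sum vanish.
  refine (flip_commute hxy (flip_shift h (semi_zpow h3 (-((m + n) / 6))))).1 ?_
  omega

/-- The relation says that `y³` is conjugate by `y²`, hence equal, to `x` raised to `-q`. -/
theorem triangle_exponent [UniqueProds G] (hxy : x * y ≠ y * x)
    (h2 : x ^ (2 : ℤ) * y ≠ y * x ^ (2 : ℤ)) (h3 : x ^ (3 : ℤ) * y = y * x ^ (3 : ℤ)) {q : ℤ}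
    (h : y * x ^ (0 : ℤ) * y * x ^ q * y = x ^ (0 : ℤ)) : q ≠ 0 ∧ 3 ∣ q := by
  simp only [zpow_zero, mul_one] at h
  have hy : y ^ (3 : ℤ) = y * y * y := by
    rw [show (3 : ℤ) = 1 + 1 + 1 by norm_num, zpow_add, zpow_add, zpow_one]
  have hq : x ^ q = (y ^ (3 : ℤ))⁻¹ := by
    rw [hy, eq_inv_iff_mul_eq_one]
    calc x ^ q * (y * y * y) = (y * y)⁻¹ * (y * y * x ^ q * y) * (y * y) := by group
      _ = 1 := by rw [h]; group
  constructor
  · rintro rfl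
    rw [zpow_zero, eq_comm, inv_eq_one] at hq
    have := eq_one_of_zpow_eq_one (by norm_num) hq
    simp [this] at hxy
  · apply three_dvd hxy h2 h3
    rw [hq]; group

end Period

/-! ### Counting relations between lines -/

section Lines

variable {G : Type*} [Group G] [DecidableEq G] {x y u v w : G} {p q r : ℕ}

/-- The pairs `(j, l)` with `j < p`, `l ≤ q` and `u xʲ y = v xˡ`: the points of the line
`{u xʲ : j < p}` which right multiplication by `y` sends into the extension `{v xˡ : l ≤ q}` of
another line by one point. -/
def rel (x y u v : G) (p q : ℕ) : Finset (ℕ × ℕ) :=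
  (Finset.range p ×ˢ Finset.range (q + 1)).filter
    (fun z ↦ u * x ^ (z.1 : ℤ) * y = v * x ^ (z.2 : ℤ))

theorem mem_rel {z : ℕ × ℕ} : z ∈ rel x y u v p q ↔
    (z.1 < p ∧ z.2 < q + 1) ∧ u * x ^ (z.1 : ℤ) * y = v * x ^ (z.2 : ℤ) := by
  simp [rel]

omit [DecidableEq G] in
theorem rel_semi {j l j' l' : ℤ} (h : u * x ^ j * y = v * x ^ l)
    (h' : u * x ^ j' * y = v * x ^ l') : x ^ (j' - j) * y = y * x ^ (l' - l) := by
  have e : v = u * x ^ j * y * x ^ (-l) := by rw [h]; group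
  rw [e] at h'
  have e2 : x ^ j' * y = x ^ j * (y * x ^ (l' - l)) := by
    apply mul_left_cancel (a := u)
    rw [← mul_assoc, h']; group
  rw [sub_eq_neg_add, zpow_add, mul_assoc, e2, ← mul_assoc, ← zpow_add]
  simp

omit [DecidableEq G] in
theorem rel_flip {j l j' l' : ℤ} (h : u * x ^ j * y = v * x ^ l)
    (h' : v * x ^ j' * y = u * x ^ l') : y * x ^ (j' - l) * y = x ^ (l' - j) := by
  have e : v = u * x ^ j * y * x ^ (-l) := by rw [h]; group
  rw [e] at h'
  apply mul_left_cancel (a := u * x ^ j)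
  rw [mul_assoc u (x ^ j) (x ^ _), ← zpow_add, add_sub_cancel, ← h']; group

omit [DecidableEq G] in
theorem rel_triangle {j l j' l' j'' l'' : ℤ} (h : u * x ^ j * y = v * x ^ l)
    (h' : v * x ^ j' * y = w * x ^ l') (h'' : w * x ^ j'' * y = u * x ^ l'') :
    y * x ^ (j' - l) * y * x ^ (j'' - l') * y = x ^ (l'' - j) := by
  have e : v = u * x ^ j * y * x ^ (-l) := by rw [h]; group
  have e' : w = v * x ^ j' * y * x ^ (-l') := by rw [h']; group
  rw [e', e] at h''
  apply mul_left_cancel (a := u * x ^ j)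
  rw [mul_assoc u (x ^ j) (x ^ _), ← zpow_add, add_sub_cancel, ← h'']; group

omit [DecidableEq G] in
theorem coset_of_eq {i j : ℤ} (h : u * x ^ i = v * x ^ j) : u⁻¹ * v ∈ Subgroup.zpowers x :=
  Subgroup.mem_zpowers_iff.2 ⟨i - j, by
    rw [eq_inv_mul_iff_mul_eq, zpow_sub, ← mul_assoc, h, mul_inv_cancel_right]⟩

theorem rel_fst_inj [UniqueProds G] (hx : x ≠ 1) {z z' : ℕ × ℕ} (h : z ∈ rel x y u v p q)
    (h' : z' ∈ rel x y u v p q) (e : z.1 = z'.1) : z = z' := by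
  have h1 := (mem_rel.1 h).2
  have h2 := (mem_rel.1 h').2
  rw [e, h2] at h1
  exact Prod.ext e (by exact_mod_cast (zpow_inj hx (mul_left_cancel h1)).symm)

theorem rel_snd_inj [UniqueProds G] (hx : x ≠ 1) {z z' : ℕ × ℕ} (h : z ∈ rel x y u v p q)
    (h' : z' ∈ rel x y u v p q) (e : z.2 = z'.2) : z = z' := by
  have h1 := (mem_rel.1 h).2
  have h2 := (mem_rel.1 h').2
  rw [e, ← h2] at h1
  exact Prod.ext (by exact_mod_cast zpow_inj hx (mul_left_cancel (mul_right_cancel h1))) e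

/-- A point of the line through `u` is sent to at most one other line. -/
theorem rel_card_fst [UniqueProds G] (hx : x ≠ 1) (hvw : v⁻¹ * w ∉ Subgroup.zpowers x) :
    (rel x y u v p q).card + (rel x y u w p r).card ≤ p := by
  rw [← Finset.card_image_of_injOn (f := Prod.fst) (s := rel x y u v p q)
      (fun z hz z' hz' e ↦ rel_fst_inj hx hz hz' e),
    ← Finset.card_image_of_injOn (f := Prod.fst) (s := rel x y u w p r)
      (fun z hz z' hz' e ↦ rel_fst_inj hx hz hz' e), ← Finset.card_union_of_disjoint]
  · refine (Finset.card_le_card fun j hj ↦ ?_).trans_eq (Finset.card_range p)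
    simp only [Finset.mem_union, Finset.mem_image] at hj
    rcases hj with ⟨z, hz, rfl⟩ | ⟨z, hz, rfl⟩ <;> exact Finset.mem_range.2 (mem_rel.1 hz).1.1
  · refine Finset.disjoint_left.2 fun j hj hj' ↦ ?_
    obtain ⟨z, hz, rfl⟩ := Finset.mem_image.1 hj
    obtain ⟨z', hz', e⟩ := Finset.mem_image.1 hj'
    have h1 := (mem_rel.1 hz).2
    rw [← e, (mem_rel.1 hz').2] at h1
    exact hvw (coset_of_eq h1.symm)

/-- A point of the extended line through `w` is reached from at most one other line. -/
theorem rel_card_snd [UniqueProds G] (hx : x ≠ 1) (huv : u⁻¹ * v ∉ Subgroup.zpowers x) :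
    (rel x y u w p r).card + (rel x y v w q r).card ≤ r + 1 := by
  rw [← Finset.card_image_of_injOn (f := Prod.snd) (s := rel x y u w p r)
      (fun z hz z' hz' e ↦ rel_snd_inj hx hz hz' e),
    ← Finset.card_image_of_injOn (f := Prod.snd) (s := rel x y v w q r)
      (fun z hz z' hz' e ↦ rel_snd_inj hx hz hz' e), ← Finset.card_union_of_disjoint]
  · refine (Finset.card_le_card fun j hj ↦ ?_).trans_eq (Finset.card_range (r + 1))
    simp only [Finset.mem_union, Finset.mem_image] at hj
    rcases hj with ⟨z, hz, rfl⟩ | ⟨z, hz, rfl⟩ <;> exact Finset.mem_range.2 (mem_rel.1 hz).1.2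
  · refine Finset.disjoint_left.2 fun j hj hj' ↦ ?_
    obtain ⟨z, hz, rfl⟩ := Finset.mem_image.1 hj
    obtain ⟨z', hz', e⟩ := Finset.mem_image.1 hj'
    have h1 := (mem_rel.1 hz).2
    rw [← e, ← (mem_rel.1 hz').2] at h1
    exact huv (coset_of_eq (mul_right_cancel h1))

/-- A set of naturals below `p` with gaps at least `d` has at most `⌈p / d⌉` elements. -/
theorem card_le_of_spaced {α : Type*} {S : Finset α} {f : α → ℕ} {d p : ℕ} (hd : 0 < d)
    (hp : ∀ z ∈ S, f z < p) (hs : ∀ z ∈ S, ∀ z' ∈ S, z ≠ z' → f z ≤ f z' → f z + d ≤ f z') :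
    S.card ≤ (p + d - 1) / d := by
  rw [← Finset.card_range ((p + d - 1) / d)]
  refine Finset.card_le_card_of_injOn (fun z ↦ f z / d) (fun z hz ↦ ?_) (fun z hz z' hz' e ↦ ?_)
  · have := hp z hz
    have h1 : f z / d + 1 = (f z + d) / d := (Nat.add_div_right _ hd).symm
    have h2 : (f z + d) / d ≤ (p + d - 1) / d := Nat.div_le_div_right (by omega)
    simp only [Finset.coe_range, Set.mem_Iio]
    omega
  · have e' : f z / d = f z' / d := e
    by_contra hne
    rcases le_total (f z) (f z') with h | h
    · have h1 := Nat.div_le_div_right (c := d) (hs z hz z' hz' hne h)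
      rw [Nat.add_div_right _ hd] at h1
      omega
    · have h1 := Nat.div_le_div_right (c := d) (hs z' hz' z hz (Ne.symm hne) h)
      rw [Nat.add_div_right _ hd] at h1
      omega

theorem rel_spaced_fst {d : ℕ} (hd : 0 < d) [UniqueProds G] (hx : x ≠ 1)
    (hs : ∀ t : ℕ, 0 < t → t < d → ∀ l : ℤ, x ^ (t : ℤ) * y ≠ y * x ^ l) :
    (rel x y u v p q).card ≤ (p + d - 1) / d := by
  refine card_le_of_spaced (f := Prod.fst) hd (fun z hz ↦ (mem_rel.1 hz).1.1)
    fun z hz z' hz' hne hle ↦ ?_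
  by_contra hlt
  have h := rel_semi (mem_rel.1 hz).2 (mem_rel.1 hz').2
  have : z.1 ≠ z'.1 := fun e ↦ hne (rel_fst_inj hx hz hz' e)
  rw [← Nat.cast_sub hle] at h
  exact hs _ (by omega) (by omega) _ h

theorem rel_spaced_snd {d : ℕ} (hd : 0 < d) [UniqueProds G] (hx : x ≠ 1)
    (hs : ∀ t : ℕ, 0 < t → t < d → ∀ l : ℤ, x ^ l * y ≠ y * x ^ (t : ℤ)) :
    (rel x y u v p q).card ≤ (q + 1 + d - 1) / d := by
  refine card_le_of_spaced (f := Prod.snd) hd (fun z hz ↦ (mem_rel.1 hz).1.2)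
    fun z hz z' hz' hne hle ↦ ?_
  by_contra hlt
  have h := rel_semi (mem_rel.1 hz).2 (mem_rel.1 hz').2
  have : z.2 ≠ z'.2 := fun e ↦ hne (rel_snd_inj hx hz hz' e)
  rw [← Nat.cast_sub hle] at h
  exact hs _ (by omega) (by omega) _ h

/-- If `y` conjugates `x` into `⟨x⟩`, it sends each coset of `⟨x⟩` into a single coset. -/
theorem rel_target (h : ∃ l : ℤ, x * y = y * x ^ l) (hvw : v⁻¹ * w ∉ Subgroup.zpowers x) :
    (rel x y u v p q).card = 0 ∨ (rel x y u w p r).card = 0 := by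
  by_contra! hne
  obtain ⟨z, hz⟩ := Finset.card_pos.1 (Nat.pos_of_ne_zero hne.1)
  obtain ⟨z', hz'⟩ := Finset.card_pos.1 (Nat.pos_of_ne_zero hne.2)
  obtain ⟨l, hl⟩ := h
  have hs := semi_zpow (x := x) (y := y) (a := 1) (b := l) (by rwa [zpow_one]) ((z'.1 : ℤ) - z.1)
  have h1 := (mem_rel.1 hz).2
  have h2 := (mem_rel.1 hz').2
  refine hvw (coset_of_eq (i := z.2 + l * ((z'.1 : ℤ) - z.1)) (j := z'.2) ?_)
  rw [zpow_add, ← mul_assoc, ← h1, ← h2, mul_assoc, ← hs, one_mul, zpow_sub]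
  group

/-- Two lines of length two and one of length three cannot all be linked to one another in both
directions when neither `x` nor `x²` commutes with `y`. The links between the two short lines give
`x³ y = y x³`; the resulting congruences determine most exponents, and a triangle relation excludes
what is left. -/
theorem lines_three_two_two [UniqueProds G] (hxy : x * y ≠ y * x)
    (h2 : x ^ (2 : ℤ) * y ≠ y * x ^ (2 : ℤ))
    (huw : u⁻¹ * w ∉ Subgroup.zpowers x)
    (hvw : v⁻¹ * w ∉ Subgroup.zpowers x)
    (n12 : (rel x y u v 2 2).card ≠ 0) (n21 : (rel x y v u 2 2).card ≠ 0)
    (n13 : (rel x y u w 2 3).card ≠ 0) (n31 : (rel x y w u 3 2).card ≠ 0)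
    (n23 : (rel x y v w 2 3).card ≠ 0) (n32 : (rel x y w v 3 2).card ≠ 0) : False := by
  have hx := ne_one_of_not_commute hxy
  obtain ⟨⟨j12, l12⟩, h12⟩ := Finset.card_pos.1 (Nat.pos_of_ne_zero n12)
  obtain ⟨⟨j21, l21⟩, h21⟩ := Finset.card_pos.1 (Nat.pos_of_ne_zero n21)
  obtain ⟨⟨j13, l13⟩, h13⟩ := Finset.card_pos.1 (Nat.pos_of_ne_zero n13)
  obtain ⟨⟨j31, l31⟩, h31⟩ := Finset.card_pos.1 (Nat.pos_of_ne_zero n31)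
  obtain ⟨⟨j23, l23⟩, h23⟩ := Finset.card_pos.1 (Nat.pos_of_ne_zero n23)
  obtain ⟨⟨j32, l32⟩, h32⟩ := Finset.card_pos.1 (Nat.pos_of_ne_zero n32)
  obtain ⟨b12, h12⟩ := mem_rel.1 h12
  obtain ⟨b21, h21⟩ := mem_rel.1 h21
  obtain ⟨b13, h13⟩ := mem_rel.1 h13
  obtain ⟨b31, h31⟩ := mem_rel.1 h31
  obtain ⟨b23, h23⟩ := mem_rel.1 h23
  obtain ⟨b32, h32⟩ := mem_rel.1 h32
  dsimp only at b12 b21 b13 b31 b23 b32 h12 h21 h13 h31 h23 h32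
  have dj1 : j12 ≠ j13 := by
    rintro rfl; exact hvw (coset_of_eq (h12.symm.trans h13))
  have dj2 : j21 ≠ j23 := by
    rintro rfl; exact huw (coset_of_eq (h21.symm.trans h23))
  have dl1 : l21 ≠ l31 := by
    rintro rfl; exact hvw (coset_of_eq (mul_right_cancel (h21.trans h31.symm)))
  have dl2 : l12 ≠ l32 := by
    rintro rfl; exact huw (coset_of_eq (mul_right_cancel (h12.trans h32.symm)))
  have t12 := rel_flip h12 h21
  have t13 := rel_flip h13 h31
  have t23 := rel_flip h23 h32
  have h3 : x ^ (3 : ℤ) * y = y * x ^ (3 : ℤ) := by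
    obtain ⟨s0, s⟩ := flip_commute hxy t12
    have hk : -3 ≤ (j21 : ℤ) - l12 + (l21 - j12) ∧ (j21 : ℤ) - l12 + (l21 - j12) ≤ 3 := by omega
    have s' := semi_zpow s (-1)
    generalize (j21 : ℤ) - l12 + (l21 - j12) = k at s0 s s' hk
    obtain rfl | rfl | rfl | rfl | rfl | rfl :
        k = 3 ∨ k = 2 ∨ k = 1 ∨ k = -3 ∨ k = -2 ∨ k = -1 := by
      omega
    · exact s
    · exact absurd s h2
    · exact absurd (by simpa using s) hxy
    · exact s'
    · exact absurd s' h2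
    · exact absurd (by simpa using s') hxy
  have m12 := flip_mod_six hxy h2 h3 t12
  have m13 := flip_mod_six hxy h2 h3 t13
  have m23 := flip_mod_six hxy h2 h3 t23
  have d13 := semi_diag hxy t12 (flip_sub t12 t13)
  have d23 := semi_diag hxy t12 (flip_sub t12 t23)
  have c1 : (j23 : ℤ) - l12 = 0 → (l31 : ℤ) - j12 = 0 →
      (j31 : ℤ) - l23 ≠ 0 ∧ 3 ∣ (j31 : ℤ) - l23 := fun e e' ↦ by
    have := rel_triangle h12 h23 h31
    rw [e, e'] at this
    exact triangle_exponent hxy h2 h3 this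
  have c2 : (j13 : ℤ) - l21 = 0 → (l32 : ℤ) - j21 = 0 →
      (j32 : ℤ) - l13 ≠ 0 ∧ 3 ∣ (j32 : ℤ) - l13 := fun e e' ↦ by
    have := rel_triangle h21 h13 h32
    rw [e, e'] at this
    exact triangle_exponent hxy h2 h3 this
  rcases (by omega : (j21 : ℤ) - l12 + (l21 - j12) = 3 ∨ (j21 : ℤ) - l12 + (l21 - j12) = -3)
    with e | e
  · obtain ⟨rfl, rfl, rfl, rfl⟩ : j21 = 1 ∧ l21 = 2 ∧ j12 = 0 ∧ l12 = 0 := by omega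
    clear c2 
    obtain ⟨rfl, rfl⟩ : j13 = 1 ∧ j23 = 0 := by omega
    have : l31 = 0 := by omega
    subst this
    have := c1 (by norm_num) (by norm_num)
    omega
  · obtain ⟨rfl, rfl, rfl, rfl⟩ : j21 = 0 ∧ l21 = 0 ∧ j12 = 1 ∧ l12 = 2 := by omega
    clear c1
    obtain ⟨rfl, rfl⟩ : j13 = 0 ∧ j23 = 1 := by omega
    have : l32 = 0 := by omega
    subst this
    have := c2 (by norm_num) (by norm_num)
    omega

omit [DecidableEq G] in
theorem coset_symm (h : u⁻¹ * v ∉ Subgroup.zpowers x) : v⁻¹ * u ∉ Subgroup.zpowers x := fun h' ↦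
  h (by simpa using Subgroup.inv_mem _ h')

/-- Two lines of length three cannot be doubly linked in both directions if every relation
`xᵃ y = y xᵇ` has `a = b`: since consecutive points are not both linked, each line has its initial
point linked to one of the first two points of the other, and the two links make `x` commute
with `y`. -/
theorem lines_three_three [UniqueProds G] (hxy : x * y ≠ y * x)
    (hd : ∀ a b : ℤ, x ^ a * y = y * x ^ b → a = b)
    (h1 : 2 ≤ (rel x y u v 3 3).card) (h2 : 2 ≤ (rel x y v u 3 3).card) : False := by
  have hx := ne_one_of_not_commute hxy
  have key : ∀ {u v : G}, 2 ≤ (rel x y u v 3 3).card →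
      ∃ l : ℕ, l ≤ 1 ∧ u * x ^ (0 : ℤ) * y = v * x ^ (l : ℤ) := by
    intro u v h
    obtain ⟨z, hz, z', hz', hne⟩ := Finset.one_lt_card.1 h
    have ne1 : z.1 ≠ z'.1 := fun e ↦ hne (rel_fst_inj hx hz hz' e)
    obtain ⟨b, e⟩ := mem_rel.1 hz
    obtain ⟨b', e'⟩ := mem_rel.1 hz'
    have hs := rel_semi e e'
    have heq := hd _ _ hs
    have n1 : (z'.1 : ℤ) - z.1 ≠ 1 := fun h ↦ hxy (by rw [← heq, h] at hs; simpa using hs)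
    have n2 : (z'.1 : ℤ) - z.1 ≠ -1 := fun h ↦ hxy (by
      rw [← heq, h] at hs
      simpa using semi_zpow hs (-1))
    rcases (by omega : z.1 = 0 ∧ z.2 ≤ 1 ∨ z'.1 = 0 ∧ z'.2 ≤ 1) with ⟨h0, hl⟩ | ⟨h0, hl⟩
    · rw [h0] at e
      exact ⟨_, hl, by exact_mod_cast e⟩
    · rw [h0] at e'
      exact ⟨_, hl, by exact_mod_cast e'⟩
  obtain ⟨l, hl, e⟩ := key h1
  obtain ⟨l', hl', e'⟩ := key h2
  obtain ⟨h0, hc⟩ := flip_commute hxy (rel_flip e e')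
  have hc' := semi_zpow hc (-1)
  rcases (by omega : (0 : ℤ) - l + (l' - 0) = 1 ∨ (0 : ℤ) - l + (l' - 0) = -1) with h | h <;>
    rw [h] at hc hc'
  · exact hxy (by simpa using hc)
  · exact hxy (by simpa using hc')

/-- The number of links along a path of three lines, for which the only tight case is excluded by
`lines_three_three`. -/
theorem lines_path [UniqueProds G] (hxy : x * y ≠ y * x)
    (hd : ∀ a b : ℤ, x ^ a * y = y * x ^ b → a = b)
    (huw : u⁻¹ * w ∉ Subgroup.zpowers x)
    (hp : 0 < p) (hq : 0 < q) (hr : 0 < r) (hs : p + q + r = 7) :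
    (rel x y u v p q).card + (rel x y v u q p).card + (rel x y v w q r).card
      + (rel x y w v r q).card ≤ 5 := by
  have hx := ne_one_of_not_commute hxy
  have hf : ∀ {u v : G} {p q : ℕ}, (rel x y u v p q).card ≤ (p + 2 - 1) / 2 :=
    rel_spaced_fst (by norm_num) hx fun t h0 h1 l h ↦ by
      obtain rfl : t = 1 := by omega
      rw [← hd _ _ h] at h
      exact hxy (by simpa using h)
  have hg : ∀ {u v : G} {p q : ℕ}, (rel x y u v p q).card ≤ (q + 1 + 2 - 1) / 2 :=
    rel_spaced_snd (by norm_num) hx fun t h0 h1 l h ↦ by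
      obtain rfl : t = 1 := by omega
      rw [hd _ _ h] at h
      exact hxy (by simpa using h)
  have a1 := rel_card_fst (y := y) (u := v) (p := q) (q := p) (r := r) hx huw
  have a2 := rel_card_snd (y := y) (w := v) (p := p) (q := r) (r := q) hx huw
  have f1 := hf (u := u) (v := v) (p := p) (q := q)
  have f2 := hf (u := v) (v := u) (p := q) (q := p)
  have f3 := hf (u := v) (v := w) (p := q) (q := r)
  have f4 := hf (u := w) (v := v) (p := r) (q := q)
  have g1 := hg (u := u) (v := v) (p := p) (q := q)
  have g2 := hg (u := v) (v := u) (p := q) (q := p)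
  have g3 := hg (u := v) (v := w) (p := q) (q := r)
  have g4 := hg (u := w) (v := v) (p := r) (q := q)
  by_contra hlt
  rcases (by omega : q = 3 ∧ (p = 1 ∧ r = 3 ∨ p = 3 ∧ r = 1)) with ⟨rfl, ⟨rfl, rfl⟩ | ⟨rfl, rfl⟩⟩
  · exact lines_three_three hxy hd (u := v) (v := w) (by omega) (by omega)
  · exact lines_three_three hxy hd (u := v) (v := u) (by omega) (by omega)

theorem rel_exists (h : (rel x y u v p q).card ≠ 0) :
    ∃ j l : ℤ, u * x ^ j * y = v * x ^ l := by
  obtain ⟨z, hz⟩ := Finset.card_pos.1 (Nat.pos_of_ne_zero h)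
  exact ⟨_, _, (mem_rel.1 hz).2⟩

/-- Three lines in distinct cosets of `⟨x⟩`, with seven points in all, have at most five points sent
by `y` into the one-point extensions of the other lines. -/
theorem lines_bound [UniqueProds G] (hxy : x * y ≠ y * x)
    (huv : u⁻¹ * v ∉ Subgroup.zpowers x) (huw : u⁻¹ * w ∉ Subgroup.zpowers x)
    (hvw : v⁻¹ * w ∉ Subgroup.zpowers x)
    (hp : 0 < p) (hq : 0 < q) (hr : 0 < r) (hs : p + q + r = 7) :
    (rel x y u v p q).card + (rel x y u w p r).card + (rel x y v u q p).card
      + (rel x y v w q r).card + (rel x y w u r p).card + (rel x y w v r q).card ≤ 5 := by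
  have hx := ne_one_of_not_commute hxy
  have a1 := rel_card_fst (y := y) (u := u) (p := p) (q := q) (r := r) hx hvw
  have a2 := rel_card_fst (y := y) (u := v) (p := q) (q := p) (r := r) hx huw
  have a3 := rel_card_fst (y := y) (u := w) (p := r) (q := p) (r := q) hx huv
  have b1 := rel_card_snd (y := y) (w := u) (p := q) (q := r) (r := p) hx hvw
  have b2 := rel_card_snd (y := y) (w := v) (p := p) (q := r) (r := q) hx huw
  have b3 := rel_card_snd (y := y) (w := w) (p := p) (q := q) (r := r) hx huv
  by_cases hl : ∃ l : ℤ, x * y = y * x ^ l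
  · have t1 := rel_target (u := u) (p := p) (q := q) (r := r) hl hvw
    have t2 := rel_target (u := v) (p := q) (q := p) (r := r) hl huw
    have t3 := rel_target (u := w) (p := r) (q := p) (r := q) hl huv
    obtain ⟨l, hl⟩ := hl
    have noflip : ∀ {u v : G} {p q : ℕ},
        (rel x y u v p q).card = 0 ∨ (rel x y v u q p).card = 0 := by
      intro u v p q
      by_contra! hne
      obtain ⟨j, k, h⟩ := rel_exists hne.1
      obtain ⟨j', k', h'⟩ := rel_exists hne.2
      have := semi_diag (a := 1) (b := l) hxy (rel_flip h h') (by rwa [zpow_one])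
      rw [← this, zpow_one] at hl
      exact hxy hl
    have notri : ∀ {u v w : G} {p q r : ℕ}, (rel x y u v p q).card = 0 ∨
        (rel x y v w q r).card = 0 ∨ (rel x y w u r p).card = 0 := by
      intro u v w p q r
      by_contra! hne
      obtain ⟨j, k, h⟩ := rel_exists hne.1
      obtain ⟨j', k', h'⟩ := rel_exists hne.2.1
      obtain ⟨j'', k'', h''⟩ := rel_exists hne.2.2
      exact no_triangle_of_semi hxy hl (rel_triangle h h' h'')
    have f1 := noflip (u := u) (v := v) (p := p) (q := q)
    have f2 := noflip (u := u) (v := w) (p := p) (q := r)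
    have f3 := noflip (u := v) (v := w) (p := q) (q := r)
    have c1 := notri (u := u) (v := v) (w := w) (p := p) (q := q) (r := r)
    have c2 := notri (u := u) (v := w) (w := v) (p := p) (q := r) (r := q)
    omega
  have hf : ∀ {u v : G} {p q : ℕ}, (rel x y u v p q).card ≤ (p + 2 - 1) / 2 :=
    rel_spaced_fst (by norm_num) hx fun t h0 h1 l h ↦ by
      obtain rfl : t = 1 := by omega
      exact hl ⟨l, by simpa using h⟩
  by_cases hflip : ∃ m n : ℤ, y * x ^ m * y = x ^ n
  swap
  · have noflip : ∀ {u v : G} {p q : ℕ},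
        (rel x y u v p q).card = 0 ∨ (rel x y v u q p).card = 0 := by
      intro u v p q
      by_contra! hne
      obtain ⟨j, k, h⟩ := rel_exists hne.1
      obtain ⟨j', k', h'⟩ := rel_exists hne.2
      exact hflip ⟨_, _, rel_flip h h'⟩
    have f1 := noflip (u := u) (v := v) (p := p) (q := q)
    have f2 := noflip (u := u) (v := w) (p := p) (q := r)
    have f3 := noflip (u := v) (v := w) (p := q) (q := r)
    have g1 := hf (u := u) (v := v) (p := p) (q := q)
    have g2 := hf (u := u) (v := w) (p := p) (q := r)
    have g3 := hf (u := v) (v := u) (p := q) (q := p)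
    have g4 := hf (u := v) (v := w) (p := q) (q := r)
    have g5 := hf (u := w) (v := u) (p := r) (q := p)
    have g6 := hf (u := w) (v := v) (p := r) (q := q)
    omega
  obtain ⟨m, n, hmn⟩ := hflip
  have hd : ∀ a b : ℤ, x ^ a * y = y * x ^ b → a = b := fun a b h ↦ semi_diag hxy hmn h
  by_cases hx2 : x ^ (2 : ℤ) * y = y * x ^ (2 : ℤ)
  · -- A link in one direction gives one in the other, with exponents that may leave the lines.
    have back : ∀ {u v : G}, (∃ j l : ℤ, u * x ^ j * y = v * x ^ l) →
        ∃ j l : ℤ, v * x ^ j * y = u * x ^ l := by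
      rintro u v ⟨j, l, h⟩
      refine ⟨l + m, j + n, ?_⟩
      rw [zpow_add, zpow_add, ← hmn, ← mul_assoc, ← h]
      group
    by_cases e1 : ∃ j l : ℤ, u * x ^ j * y = v * x ^ l
    swap
    · have z1 : (rel x y u v p q).card = 0 := by
        by_contra h; exact e1 (rel_exists h)
      have z2 : (rel x y v u q p).card = 0 := by
        by_contra h; exact e1 (back (rel_exists h))
      have := lines_path hxy hd (v := w) huv hp hr hq (by omega)
      omega
    by_cases e2 : ∃ j l : ℤ, v * x ^ j * y = w * x ^ l
    swap
    · have z1 : (rel x y v w q r).card = 0 := by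
        by_contra h; exact e2 (rel_exists h)
      have z2 : (rel x y w v r q).card = 0 := by
        by_contra h; exact e2 (back (rel_exists h))
      have := lines_path hxy hd (v := u) hvw hq hp hr (by omega)
      omega
    by_cases e3 : ∃ j l : ℤ, w * x ^ j * y = u * x ^ l
    swap
    · have z1 : (rel x y w u r p).card = 0 := by
        by_contra h; exact e3 (rel_exists h)
      have z2 : (rel x y u w p r).card = 0 := by
        by_contra h; exact e3 (back (rel_exists h))
      have := lines_path hxy hd (v := v) huw hp hq hr (by omega)
      omega
    obtain ⟨j, l, h⟩ := e1
    obtain ⟨j', l', h'⟩ := e2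
    obtain ⟨j'', l'', h''⟩ := e3
    exact absurd (rel_triangle h h' h'') fun h ↦ no_triangle_of_flip hxy hx2 hmn h
  have hsp : ∀ t : ℕ, 0 < t → t < 3 → x ^ (t : ℤ) * y ≠ y * x ^ (t : ℤ) := by
    intro t h0 h1 h
    obtain rfl | rfl : t = 1 ∨ t = 2 := by omega
    · exact hxy (by simpa using h)
    · exact hx2 (by exact_mod_cast h)
  have hf : ∀ {u v : G} {p q : ℕ}, (rel x y u v p q).card ≤ (p + 3 - 1) / 3 :=
    rel_spaced_fst (by norm_num) hx fun t h0 h1 l h ↦ by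
      rw [← hd _ _ h] at h
      exact hsp t h0 h1 h
  have hg : ∀ {u v : G} {p q : ℕ}, (rel x y u v p q).card ≤ (q + 1 + 3 - 1) / 3 :=
    rel_spaced_snd (by norm_num) hx fun t h0 h1 l h ↦ by
      rw [hd _ _ h] at h
      exact hsp t h0 h1 h
  have f1 := hf (u := u) (v := v) (p := p) (q := q)
  have f2 := hf (u := u) (v := w) (p := p) (q := r)
  have f3 := hf (u := v) (v := u) (p := q) (q := p)
  have f4 := hf (u := v) (v := w) (p := q) (q := r)
  have f5 := hf (u := w) (v := u) (p := r) (q := p)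
  have f6 := hf (u := w) (v := v) (p := r) (q := q)
  have g1 := hg (u := u) (v := v) (p := p) (q := q)
  have g2 := hg (u := u) (v := w) (p := p) (q := r)
  have g3 := hg (u := v) (v := u) (p := q) (q := p)
  have g4 := hg (u := v) (v := w) (p := q) (q := r)
  have g5 := hg (u := w) (v := u) (p := r) (q := p)
  have g6 := hg (u := w) (v := v) (p := r) (q := q)
  by_contra hlt
  obtain ⟨rfl, rfl, rfl⟩ | ⟨rfl, rfl, rfl⟩ | ⟨rfl, rfl, rfl⟩ :
      p = 3 ∧ q = 2 ∧ r = 2 ∨ p = 2 ∧ q = 3 ∧ r = 2 ∨ p = 2 ∧ q = 2 ∧ r = 3 := by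
    have : p ≤ 5 := by omega
    have : q ≤ 5 := by omega
    interval_cases p <;> interval_cases q <;> omega
  · exact lines_three_two_two hxy hx2 (u := v) (v := w) (w := u) (coset_symm huv) (coset_symm huw)
      (by omega) (by omega) (by omega) (by omega) (by omega) (by omega)
  · exact lines_three_two_two hxy hx2 (u := u) (v := w) (w := v) huv (coset_symm hvw)
      (by omega) (by omega) (by omega) (by omega) (by omega) (by omega)
  · exact lines_three_two_two hxy hx2 (u := u) (v := v) (w := w) huw hvw
      (by omega) (by omega) (by omega) (by omega) (by omega) (by omega)

end Lines


/-! ### Three cosets -/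

section Cosets

variable {G : Type*} [Group G] [DecidableEq G] [UniqueProds G]

theorem exists_three_cosets {A B : Finset G} {a c : G} (h1 : (1 : G) ∈ A)
    (hA : ∀ u ∈ A, ∀ v ∈ A, u * v = v * u) (ha : a ∈ A) (hac : a * c ≠ c * a) (hB : B.card = 7)
    (hlt : (B * insert c A).card < A.card + 10) :
    ∃ b₀ ∈ B, ∃ b₁ ∈ B, ∃ b₂ ∈ B, b₀⁻¹ * b₁ ∉ Subgroup.closure (A : Set G) ∧
      b₀⁻¹ * b₂ ∉ Subgroup.closure (A : Set G) ∧ b₁⁻¹ * b₂ ∉ Subgroup.closure (A : Set G) := by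
  classical
  obtain ⟨b₀, hb₀⟩ : B.Nonempty := Finset.card_pos.1 (by omega)
  set H := Subgroup.closure (A : Set G) with hH
  have htrans : ∀ {d b b' : G}, d⁻¹ * b ∈ H → d⁻¹ * b' ∈ H → b⁻¹ * b' ∈ H := by
    intro d b b' h h'
    have : b⁻¹ * b' = (d⁻¹ * b)⁻¹ * (d⁻¹ * b') := by group
    exact this ▸ H.mul_mem (H.inv_mem h) h'
  by_contra! hno
  by_cases h₁ : ∀ b ∈ B, b₀⁻¹ * b ∈ H
  · exact absurd (one_coset h1 hA ha hac hB fun b hb b' hb' ↦ htrans (h₁ b hb) (h₁ b' hb'))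
      (by omega)
  push Not at h₁
  obtain ⟨b₁, hb₁, hn₁⟩ := h₁
  have h := two_cosets (B₁ := B.filter fun b ↦ b₀⁻¹ * b ∈ H)
    (B₂ := B.filter fun b ↦ ¬ b₀⁻¹ * b ∈ H) h1 hA ha hac
    (by rw [Finset.card_filter_add_card_filter_not, hB])
    ⟨b₀, by simp [hb₀, H.one_mem]⟩ ⟨b₁, by simp [hb₁, hn₁]⟩ ?_ ?_ ?_
  · rw [Finset.filter_union_filter_not_eq] at h
    omega
  · intro b hb b' hb'
    rw [Finset.mem_filter] at hb hb'
    exact htrans hb.2 hb'.2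
  · intro b hb b' hb'
    rw [Finset.mem_filter] at hb hb'
    exact htrans (hno b₀ hb₀ b₁ hb₁ b hb.1 hn₁ hb.2) (hno b₀ hb₀ b₁ hb₁ b' hb'.1 hn₁ hb'.2)
  · intro b hb b' hb' hbb'
    rw [Finset.mem_filter] at hb hb'
    apply hb'.2
    have := H.mul_mem hb.2 hbb'
    rwa [mul_assoc, mul_inv_cancel_left] at this

/-- If `A` has at least three elements and `B` meets three cosets of `⟨A⟩`, then `BA` is already
large enough. -/
theorem card_mul_insert_ge {A B : Finset G} {a c : G} (h1 : (1 : G) ∈ A)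
    (hA : ∀ u ∈ A, ∀ v ∈ A, u * v = v * u) (ha : a ∈ A) (hac : a * c ≠ c * a) (hB : B.card = 7)
    (hA3 : 3 ≤ A.card) : A.card + 10 ≤ (B * insert c A).card := by
  classical
  by_contra! hlt
  obtain ⟨b₀, hb₀, b₁, hb₁, b₂, hb₂, h01, h02, h12⟩ := exists_three_cosets h1 hA ha hac hB hlt
  set H := Subgroup.closure (A : Set G) with hH
  have hAH : ∀ u ∈ A, u ∈ H := fun u hu ↦ Subgroup.subset_closure hu
  have hdisj : ∀ {D E : Finset G}, (∀ b ∈ D, ∀ b' ∈ E, b⁻¹ * b' ∉ H) →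
      Disjoint (D * A) (E * A) := by
    intro D E hDE
    refine Finset.disjoint_left.2 fun w hw hw' ↦ ?_
    obtain ⟨b, hb, u, hu, rfl⟩ := Finset.mem_mul.1 hw
    obtain ⟨b', hb', v, hv, hbv⟩ := Finset.mem_mul.1 hw'
    have : b⁻¹ * b' = u * v⁻¹ := by
      rw [inv_mul_eq_iff_eq_mul, ← mul_assoc, ← hbv, mul_inv_cancel_right]
    exact hDE b hb b' hb' (this ▸ H.mul_mem (hAH u hu) (H.inv_mem (hAH v hv)))
  set B₀ := B.filter fun b ↦ b₀⁻¹ * b ∈ H with hB₀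
  set R := B.filter fun b ↦ ¬ b₀⁻¹ * b ∈ H with hR
  set B₁ := R.filter fun b ↦ b₁⁻¹ * b ∈ H with hB₁
  set B₂ := R.filter fun b ↦ ¬ b₁⁻¹ * b ∈ H with hB₂
  have e1 : B₀.card + R.card = B.card := Finset.card_filter_add_card_filter_not _
  have e2 : B₁.card + B₂.card = R.card := Finset.card_filter_add_card_filter_not _
  have d1 : Disjoint (B₀ * A) (R * A) := hdisj fun b hb b' hb' h ↦ by
    rw [hB₀, Finset.mem_filter] at hb
    rw [hR, Finset.mem_filter] at hb'
    apply hb'.2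
    have := H.mul_mem hb.2 h
    rwa [mul_assoc, mul_inv_cancel_left] at this
  have d2 : Disjoint (B₁ * A) (B₂ * A) := hdisj fun b hb b' hb' h ↦ by
    rw [hB₁, Finset.mem_filter] at hb
    rw [hB₂, Finset.mem_filter] at hb'
    apply hb'.2
    have := H.mul_mem hb.2 h
    rwa [mul_assoc, mul_inv_cancel_left] at this
  have u1 : B * A = B₀ * A ∪ R * A := by
    rw [← Finset.union_mul, hB₀, hR, Finset.filter_union_filter_not_eq]
  have u2 : R * A = B₁ * A ∪ B₂ * A := by
    rw [← Finset.union_mul, hB₁, hB₂, Finset.filter_union_filter_not_eq]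
  have c1 : (B * A).card = (B₀ * A).card + (R * A).card := by
    rw [u1, Finset.card_union_of_disjoint d1]
  have c2 : (R * A).card = (B₁ * A).card + (B₂ * A).card := by
    rw [u2, Finset.card_union_of_disjoint d2]
  have n0 := card_add_card_le (B := B₀) (C := A) ⟨b₀, by simp [hB₀, hb₀, H.one_mem]⟩ ⟨1, h1⟩
  have n1 := card_add_card_le (B := B₁) (C := A) ⟨b₁, by simp [hB₁, hR, hb₁, h01, H.one_mem]⟩
    ⟨1, h1⟩
  have n2 := card_add_card_le (B := B₂) (C := A) ⟨b₂, by simp [hB₂, hR, hb₂, h02, h12]⟩ ⟨1, h1⟩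
  have := Finset.card_le_card (Finset.mul_subset_mul_left (s := B) (Finset.subset_insert c A))
  omega

end Cosets

/-! ### Sets of three elements -/

section Three

variable {G : Type*} [Group G] [DecidableEq G] [UniqueProds G] {x y : G}

/-- The exponents `j` with `e xʲ ∈ B`, if closed downwards, form a nonempty initial segment. -/
theorem exists_line_length {B : Finset G} {e : G} (hx : x ≠ 1) (he : e ∈ B)
    (hdown : ∀ n : ℕ, e * x ^ ((n + 1 : ℕ) : ℤ) ∈ B → e * x ^ (n : ℤ) ∈ B) :
    ∃ p : ℕ, 0 < p ∧ ∀ j : ℕ, e * x ^ (j : ℤ) ∈ B ↔ j < p := by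
  obtain ⟨n, -, hn⟩ := exists_last (f := fun n : ℕ ↦ e * x ^ (n : ℤ)) (A := B)
    (fun m n hmn ↦ by exact_mod_cast zpow_inj hx (mul_left_cancel hmn)) (by simpa using he)
  have hex : ∃ n : ℕ, e * x ^ (n : ℤ) ∉ B := ⟨_, hn⟩
  refine ⟨Nat.find hex, ?_, fun j ↦ ⟨fun hj ↦ ?_, fun hj ↦ not_not.1 (Nat.find_min hex hj)⟩⟩
  · rw [Nat.find_pos]
    simpa using he
  · by_contra hle
    have hall : ∀ k, ∀ j, j = Nat.find hex + k → e * x ^ (j : ℤ) ∉ B := by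
      intro k
      induction k with
      | zero => rintro j rfl; exact Nat.find_spec hex
      | succ k ih => rintro j rfl h; exact ih _ rfl (hdown _ h)
    exact hall (j - Nat.find hex) j (by omega) hj

/-- The set `C = {1, x, y}` when `|B{1, x}| ≤ 10`: if `B` meets three cosets of `⟨x⟩` then it is a
union of three progressions with ratio `x`, to which `lines_bound` applies. -/
theorem card_three_aux {B : Finset G} (hxy : x * y ≠ y * x) (hB : B.card = 7)
    (hle : (B * {1, x}).card ≤ 10) : 12 ≤ (B * {y, 1, x}).card := by
  by_contra! hlt
  have hx := ne_one_of_not_commute hxy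
  have hA : ({1, x} : Finset G).card = 2 := Finset.card_pair (Ne.symm hx)
  obtain ⟨b₀, hb₀, b₁, hb₁, b₂, hb₂, h01, h02, h12⟩ := exists_three_cosets (A := {1, x}) (B := B)
    (a := x) (c := y) (by simp) (by simp) (by simp) hxy hB (by rw [hA]; exact hlt)
  have hz : Subgroup.zpowers x ≤ Subgroup.closure (({1, x} : Finset G) : Set G) := by
    rw [Subgroup.zpowers_le]
    exact Subgroup.subset_closure (by simp)
  have hcardA : (B * {1, x}).card = 7 + (B.filter fun b ↦ b * 1 ∉ B * {x}).card := by
    rw [card_mul_insert, Finset.card_mul_singleton, hB]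
  set E := B.filter fun b ↦ b * 1 ∉ B * {x} with hE
  have hmemE : ∀ b ∈ B, b ∈ E ↔ b * x⁻¹ ∉ B := by
    intro b hb
    simp [hE, hb, Finset.mem_mul, ← eq_mul_inv_iff_mul_eq]
  -- Going back along `x` from a point of `B` leads to a point of `E`.
  have trace : ∀ b ∈ B, ∃ e ∈ E, ∃ n : ℕ, b = e * x ^ (n : ℤ) := by
    intro b hb
    obtain ⟨n, hn, hn'⟩ := exists_last (f := fun n : ℕ ↦ b * x ^ (-(n : ℤ))) (A := B)
      (fun m n hmn ↦ by
        have := zpow_inj hx (mul_left_cancel hmn)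
        omega) (by simpa using hb)
    refine ⟨_, (hmemE _ hn).2 ?_, n, by group⟩
    rwa [mul_assoc, ← zpow_sub_one, show -(n : ℤ) - 1 = -((n + 1 : ℕ) : ℤ) by push_cast; ring]
  obtain ⟨e₀, he₀, n₀, r₀⟩ := trace b₀ hb₀
  obtain ⟨e₁, he₁, n₁, r₁⟩ := trace b₁ hb₁
  obtain ⟨e₂, he₂, n₂, r₂⟩ := trace b₂ hb₂
  have hcos : ∀ {b b' e e' : G} {n n' : ℕ}, b = e * x ^ (n : ℤ) → b' = e' * x ^ (n' : ℤ) →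
      b⁻¹ * b' ∉ Subgroup.closure (({1, x} : Finset G) : Set G) →
      e⁻¹ * e' ∉ Subgroup.zpowers x := by
    intro b b' e e' n n' hb hb' hn h
    apply hn
    have : b⁻¹ * b' = x ^ (-(n : ℤ)) * (e⁻¹ * e') * x ^ (n' : ℤ) := by rw [hb, hb']; group
    rw [this]
    have hxz := Subgroup.mem_zpowers x
    exact hz (Subgroup.mul_mem _ (Subgroup.mul_mem _ (Subgroup.zpow_mem _ hxz _) h)
      (Subgroup.zpow_mem _ hxz _))
  have k01 := hcos r₀ r₁ h01
  have k02 := hcos r₀ r₂ h02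
  have k12 := hcos r₁ r₂ h12
  have hne : ∀ {e e' : G}, e⁻¹ * e' ∉ Subgroup.zpowers x → e ≠ e' := by
    rintro e _ h rfl
    exact h (by simp)
  have hE3 : ({e₀, e₁, e₂} : Finset G) = E := by
    refine Finset.eq_of_subset_of_card_le (by simp [Finset.insert_subset_iff, he₀, he₁, he₂]) ?_
    rw [Finset.card_eq_three.2 ⟨e₀, e₁, e₂, hne k01, hne k02, hne k12, rfl⟩]
    omega
  have hE3' : E.card = 3 := by
    rw [← hE3]
    exact Finset.card_eq_three.2 ⟨e₀, e₁, e₂, hne k01, hne k02, hne k12, rfl⟩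
  have hmem : ∀ e, e ∈ E ↔ e = e₀ ∨ e = e₁ ∨ e = e₂ := by
    intro e; rw [← hE3]; simp
  have hEB : ∀ e ∈ E, e ∈ B := fun e he ↦ (Finset.mem_filter.1 he).1
  have hEcos : ∀ e ∈ E, ∀ e' ∈ E, e⁻¹ * e' ∈ Subgroup.zpowers x → e = e' := by
    intro e he e' he' h
    rw [hmem] at he he'
    rcases he with rfl | rfl | rfl <;> rcases he' with rfl | rfl | rfl <;>
      first
      | rfl
      | exact absurd h (by assumption)
      | exact absurd h (coset_symm (by assumption))
  have hlen : ∀ e ∈ E, ∃ p : ℕ, 0 < p ∧ ∀ j : ℕ, e * x ^ (j : ℤ) ∈ B ↔ j < p := by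
    refine fun e he ↦ exists_line_length hx (hEB e he) fun n hn ↦ ?_
    by_cases hs : e * x ^ ((n + 1 : ℕ) : ℤ) ∈ E
    · have h2 := hEcos e he _ hs (by
        rw [inv_mul_cancel_left]; exact Subgroup.zpow_mem _ (Subgroup.mem_zpowers x) _)
      have h3 := zpow_inj hx (m := ((n + 1 : ℕ) : ℤ)) (n := 0) (by
        rw [zpow_zero]; exact left_eq_mul.1 h2)
      omega
    · rw [hmemE _ hn, not_not, mul_assoc, ← zpow_sub_one] at hs
      rwa [show ((n + 1 : ℕ) : ℤ) - 1 = n by push_cast; ring] at hs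
  obtain ⟨p₀, hp₀, l₀⟩ := hlen e₀ he₀
  obtain ⟨p₁, hp₁, l₁⟩ := hlen e₁ he₁
  obtain ⟨p₂, hp₂, l₂⟩ := hlen e₂ he₂
  have hpart : ∀ b ∈ B, (∃ j < p₀, b = e₀ * x ^ (j : ℤ)) ∨ (∃ j < p₁, b = e₁ * x ^ (j : ℤ)) ∨
      ∃ j < p₂, b = e₂ * x ^ (j : ℤ) := by
    intro b hb
    obtain ⟨e, he, n, rfl⟩ := trace b hb
    rcases (hmem e).1 he with rfl | rfl | rfl
    · exact Or.inl ⟨n, (l₀ n).1 hb, rfl⟩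
    · exact Or.inr (Or.inl ⟨n, (l₁ n).1 hb, rfl⟩)
    · exact Or.inr (Or.inr ⟨n, (l₂ n).1 hb, rfl⟩)
  have hsum : p₀ + p₁ + p₂ = 7 := by
    have hinj : ∀ e : G, Function.Injective fun j : ℕ ↦ e * x ^ (j : ℤ) := fun e m n hmn ↦ by
      exact_mod_cast zpow_inj hx (mul_left_cancel hmn)
    have hd : ∀ {e e' : G} {p p' : ℕ}, e⁻¹ * e' ∉ Subgroup.zpowers x →
        Disjoint ((Finset.range p).image fun j : ℕ ↦ e * x ^ (j : ℤ))
          ((Finset.range p').image fun j : ℕ ↦ e' * x ^ (j : ℤ)) := by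
      intro e e' p p' h
      refine Finset.disjoint_left.2 fun w hw hw' ↦ ?_
      obtain ⟨j, -, rfl⟩ := Finset.mem_image.1 hw
      obtain ⟨j', -, hj'⟩ := Finset.mem_image.1 hw'
      exact h (coset_of_eq hj'.symm)
    have : B = ((Finset.range p₀).image fun j : ℕ ↦ e₀ * x ^ (j : ℤ)) ∪
        ((Finset.range p₁).image fun j : ℕ ↦ e₁ * x ^ (j : ℤ)) ∪
        ((Finset.range p₂).image fun j : ℕ ↦ e₂ * x ^ (j : ℤ)) := by
      ext b
      simp only [Finset.mem_union, Finset.mem_image, Finset.mem_range]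
      constructor
      · intro hb
        rcases hpart b hb with ⟨j, hj, rfl⟩ | ⟨j, hj, rfl⟩ | ⟨j, hj, rfl⟩
        · exact Or.inl (Or.inl ⟨j, hj, rfl⟩)
        · exact Or.inl (Or.inr ⟨j, hj, rfl⟩)
        · exact Or.inr ⟨j, hj, rfl⟩
      · rintro ((⟨j, hj, rfl⟩ | ⟨j, hj, rfl⟩) | ⟨j, hj, rfl⟩)
        · exact (l₀ j).2 hj
        · exact (l₁ j).2 hj
        · exact (l₂ j).2 hj
    rw [← hB, this, Finset.card_union_of_disjoint, Finset.card_union_of_disjoint (hd k01),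
      Finset.card_image_of_injective _ (hinj _), Finset.card_image_of_injective _ (hinj _),
      Finset.card_image_of_injective _ (hinj _)]
    · simp
    · exact Finset.disjoint_union_left.2 ⟨hd k02, hd k12⟩
  have hbound := lines_bound hxy k01 k02 k12 hp₀ hp₁ hp₂ hsum
  have htarget : ∀ w ∈ B * {1, x}, (∃ j < p₀ + 1, w = e₀ * x ^ (j : ℤ)) ∨
      (∃ j < p₁ + 1, w = e₁ * x ^ (j : ℤ)) ∨ ∃ j < p₂ + 1, w = e₂ * x ^ (j : ℤ) := by
    intro w hw
    obtain ⟨b, hb, g, hg, rfl⟩ := Finset.mem_mul.1 hw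
    have hstep : ∀ {e : G} {p : ℕ}, (∃ j < p, b = e * x ^ (j : ℤ)) →
        ∃ j < p + 1, b * g = e * x ^ (j : ℤ) := by
      rintro e p ⟨j, hj, rfl⟩
      simp only [Finset.mem_insert, Finset.mem_singleton] at hg
      rcases hg with rfl | rfl
      · exact ⟨j, by omega, by rw [mul_one]⟩
      · exact ⟨j + 1, by omega, by push_cast; rw [mul_assoc, zpow_add_one]⟩
    exact (hpart b hb).imp hstep (Or.imp hstep hstep)
  have hself : ∀ (e : G) (i j : ℕ), e * x ^ (i : ℤ) * y ≠ e * x ^ (j : ℤ) := by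
    intro e i j h
    refine ne_zpow hxy (-i + j) ?_
    rw [zpow_add, zpow_neg, eq_inv_mul_iff_mul_eq]
    exact mul_left_cancel (a := e) (by rw [← mul_assoc, h])
  set im : G → Finset (ℕ × ℕ) → Finset G := fun e S ↦ S.image fun z ↦ e * x ^ (z.1 : ℤ) with him
  have hbad : (B.filter fun b ↦ b * y ∈ B * {1, x}) ⊆
      im e₀ (rel x y e₀ e₁ p₀ p₁) ∪ im e₀ (rel x y e₀ e₂ p₀ p₂) ∪ im e₁ (rel x y e₁ e₀ p₁ p₀) ∪
      im e₁ (rel x y e₁ e₂ p₁ p₂) ∪ im e₂ (rel x y e₂ e₀ p₂ p₀) ∪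
      im e₂ (rel x y e₂ e₁ p₂ p₁) := by
    intro b hb
    rw [Finset.mem_filter] at hb
    have hin : ∀ {e e' : G} {p p' j j' : ℕ}, j < p → j' < p' + 1 →
        e * x ^ (j : ℤ) * y = e' * x ^ (j' : ℤ) → e * x ^ (j : ℤ) ∈ im e (rel x y e e' p p') := by
      intro e e' p p' j j' hj hj' h
      exact Finset.mem_image.2 ⟨(j, j'), mem_rel.2 ⟨⟨hj, hj'⟩, h⟩, rfl⟩
    simp only [Finset.mem_union]
    rcases hpart b hb.1 with ⟨j, hj, rfl⟩ | ⟨j, hj, rfl⟩ | ⟨j, hj, rfl⟩ <;>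
      rcases htarget _ hb.2 with ⟨j', hj', h⟩ | ⟨j', hj', h⟩ | ⟨j', hj', h⟩ <;>
      first
      | exact absurd h (hself _ _ _)
      | (have := hin hj hj' h; tauto)
  have hbad5 : (B.filter fun b ↦ b * y ∈ B * {1, x}).card ≤ 5 := by
    refine (Finset.card_le_card hbad).trans (le_trans ?_ hbound)
    have hc : ∀ e S, (im e S).card ≤ S.card := fun e S ↦ Finset.card_image_le
    refine (Finset.card_union_le _ _).trans (add_le_add ?_ (hc _ _))
    refine (Finset.card_union_le _ _).trans (add_le_add ?_ (hc _ _))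
    refine (Finset.card_union_le _ _).trans (add_le_add ?_ (hc _ _))
    refine (Finset.card_union_le _ _).trans (add_le_add ?_ (hc _ _))
    exact (Finset.card_union_le _ _).trans (add_le_add (hc _ _) (hc _ _))
  have hsplit := Finset.card_filter_add_card_filter_not (s := B) (fun b ↦ b * y ∈ B * {1, x})
  have hfinal := card_mul_insert B {1, x} y
  omega

omit [UniqueProds G] in
theorem card_mul_translate (B C : Finset G) (g : G) :
    (B * (C * {g})).card = (B * C).card := by
  rw [← mul_assoc, Finset.card_mul_singleton]

/-- If two of the translates `B`, `Bx`, `By` meet in at least four points, `card_three_aux` applies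
to the corresponding pair; otherwise inclusion-exclusion suffices. -/
theorem card_three {B : Finset G} (hxy : x * y ≠ y * x) (hB : B.card = 7) :
    12 ≤ (B * {1, x, y}).card := by
  by_contra! hlt
  have t1 : 11 ≤ (B * {1, x}).card := by
    by_contra! h
    have h2 := card_three_aux hxy hB (by omega)
    rw [show ({y, 1, x} : Finset G) = {1, x, y} by ext; simp; tauto] at h2
    omega
  have t2 : 11 ≤ (B * {1, y}).card := by
    by_contra! h
    have h2 := card_three_aux (Ne.symm hxy) hB (by omega)
    rw [show ({x, 1, y} : Finset G) = {1, x, y} by ext; simp; tauto] at h2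
    omega
  have t3 : 11 ≤ (B * {x, y}).card := by
    by_contra! h
    have e : ({1, y * x⁻¹} : Finset G) * {x} = {x, y} := by
      simp [Finset.mul_singleton, Finset.smul_finset_insert]
    have e' : ({x⁻¹, 1, y * x⁻¹} : Finset G) * {x} = {1, x, y} := by
      simp [Finset.mul_singleton, Finset.smul_finset_insert]
    have h2 := card_three_aux (x := y * x⁻¹) (y := x⁻¹) (B := B) (fun hc ↦ hxy (by
      have h3 : x * (y * x⁻¹ * x⁻¹) * x * x = x * (x⁻¹ * (y * x⁻¹)) * x * x := by rw [hc]
      simpa [mul_assoc] using h3)) hB (by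
        rw [← card_mul_translate _ _ x, e]; omega)
    rw [← card_mul_translate _ _ x, e'] at h2
    omega
  have u1 : B * {1, x} = B ∪ B * {x} := by
    rw [Finset.insert_eq, Finset.mul_union, Finset.singleton_one, mul_one]
  have u2 : B * {1, y} = B ∪ B * {y} := by
    rw [Finset.insert_eq, Finset.mul_union, Finset.singleton_one, mul_one]
  have u3 : B * {x, y} = B * {x} ∪ B * {y} := by
    rw [Finset.insert_eq, Finset.mul_union]
  have u4 : B * {1, x, y} = (B ∪ B * {x}) ∪ B * {y} := by
    rw [Finset.insert_eq, Finset.mul_union, u3, Finset.union_assoc, Finset.singleton_one,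
      mul_one]
  rw [u1] at t1
  rw [u2] at t2
  rw [u3] at t3
  rw [u4] at hlt
  have cx : (B * {x}).card = 7 := by rw [Finset.card_mul_singleton, hB]
  have cy : (B * {y}).card = 7 := by rw [Finset.card_mul_singleton, hB]
  have i2 := Finset.card_union_add_card_inter B (B * {y})
  have i3 := Finset.card_union_add_card_inter (B * {x}) (B * {y})
  have i4 := Finset.card_union_add_card_inter (B ∪ B * {x}) (B * {y})
  rw [Finset.union_inter_distrib_right] at i4
  have i5 := Finset.card_union_le (B ∩ (B * {y})) (B * {x} ∩ (B * {y}))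
  omega

/-- The case `|B| = 7`, for a set `C` that need not contain `1`: the hypothesis says that the
quotients `a d⁻¹` of elements of `C` do not all commute for a fixed denominator. -/
theorem card_mul_ge_of_card_eq_seven {B : Finset G} (hB : B.card = 7) (n : ℕ) :
    ∀ C : Finset G, C.card = n →
      (∃ d ∈ C, ∃ a ∈ C, ∃ b ∈ C, a * d⁻¹ * (b * d⁻¹) ≠ b * d⁻¹ * (a * d⁻¹)) →
      n + 9 ≤ (B * C).card := by
  induction n with
  | zero =>
    rintro C hC ⟨d, hd, -⟩
    rw [Finset.card_eq_zero.1 hC] at hd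
    simp at hd
  | succ n ih =>
    rintro C hC ⟨d, hd, a, ha, b, hb, hab⟩
    have had : d ≠ a := by rintro rfl; simp at hab
    have hbd : d ≠ b := by rintro rfl; simp at hab
    have hne : a ≠ b := by rintro rfl; simp at hab
    have h3 : ({d, a, b} : Finset G).card = 3 :=
      Finset.card_eq_three.2 ⟨d, a, b, had, hbd, hne, rfl⟩
    have hsub : ({d, a, b} : Finset G) ⊆ C := by simp [Finset.insert_subset_iff, hd, ha, hb]
    have hle := Finset.card_le_card hsub
    by_cases hn : C.card = 3
    · have hCe := Finset.eq_of_subset_of_card_le hsub (by omega)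
      have h := card_three hab hB
      have e : ({d, a, b} : Finset G) * {d⁻¹} = {1, a * d⁻¹, b * d⁻¹} := by
        simp [Finset.mul_singleton, Finset.smul_finset_insert]
      rw [← e, card_mul_translate, hCe] at h
      omega
    obtain ⟨-, -, c, hc, -, hcard⟩ := exists_erase (B := B) (Finset.card_pos.1 (by omega)) ⟨d, hd⟩
    have hec := Finset.card_erase_of_mem hc
    by_cases hcomm : ∃ d ∈ C.erase c, ∃ a ∈ C.erase c, ∃ b ∈ C.erase c,
        a * d⁻¹ * (b * d⁻¹) ≠ b * d⁻¹ * (a * d⁻¹)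
    · have := ih (C.erase c) (by omega) hcomm
      omega
    push Not at hcomm
    obtain ⟨d', hd'⟩ : (C.erase c).Nonempty := Finset.card_pos.1 (by omega)
    set A := C.erase c * {d'⁻¹} with hA
    have hAc : A.card = C.card - 1 := by rw [hA, Finset.card_mul_singleton, hec]
    have hAmem : ∀ {u}, u ∈ C.erase c → u * d'⁻¹ ∈ A := fun hu ↦
      Finset.mul_mem_mul hu (Finset.mem_singleton_self _)
    have hAcomm : ∀ u ∈ A, ∀ v ∈ A, u * v = v * u := by
      intro u hu v hv
      obtain ⟨u', hu', w, hw, rfl⟩ := Finset.mem_mul.1 hu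
      obtain ⟨v', hv', w', hw', rfl⟩ := Finset.mem_mul.1 hv
      rw [Finset.mem_singleton] at hw hw'
      subst hw hw'
      exact hcomm d' hd' u' hu' v' hv'
    have hins : insert (c * d'⁻¹) A = C * {d'⁻¹} := by
      rw [hA, Finset.insert_eq, ← Finset.singleton_mul_singleton, ← Finset.union_mul,
        ← Finset.insert_eq, Finset.insert_erase hc]
    by_cases hcA : ∃ u ∈ A, u * (c * d'⁻¹) ≠ c * d'⁻¹ * u
    · obtain ⟨u, hu, huc⟩ := hcA
      have h := card_mul_insert_ge (B := B) (by simpa using hAmem hd') hAcomm hu huc hB (by omega)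
      rw [hins, card_mul_translate] at h
      omega
    -- Otherwise the whole translate `C d'⁻¹` is commutative, and so is the group it generates.
    exfalso
    push Not at hcA
    have hall : ∀ u ∈ ((C * {d'⁻¹} : Finset G) : Set G),
        ∀ v ∈ ((C * {d'⁻¹} : Finset G) : Set G), u * v = v * u := by
      rw [← hins]
      intro u hu v hv
      rw [Finset.mem_coe, Finset.mem_insert] at hu hv
      rcases hu with rfl | hu <;> rcases hv with rfl | hv
      · rfl
      · exact (hcA v hv).symm
      · exact hcA u hu
      · exact hAcomm u hu v hv
    have hq : ∀ u ∈ C, u * d⁻¹ ∈ Subgroup.closure ((C * {d'⁻¹} : Finset G) : Set G) := by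
      intro u hu
      have hm : ∀ u ∈ C, u * d'⁻¹ ∈ Subgroup.closure ((C * {d'⁻¹} : Finset G) : Set G) := fun u hu ↦
        Subgroup.subset_closure (Finset.mem_coe.2
          (Finset.mul_mem_mul hu (Finset.mem_singleton_self _)))
      have : u * d⁻¹ = u * d'⁻¹ * (d * d'⁻¹)⁻¹ := by group
      rw [this]
      exact Subgroup.mul_mem _ (hm u hu) (Subgroup.inv_mem _ (hm d hd))
    exact hab (closure_commute hall (hq a ha) (hq b hb))

end Three

end UPG

/-- Let `G` be a unique product group and `C` a finite subset of `G`
containing the identity such that the subgroup generated by `C` is not abelian. Then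
for every finite subset `B` of `G` with `|B| ≥ 7`, one has `|BC| ≥ |B| + |C| + 2`. -/
theorem card_mul_ge_of_uniqueProds {G : Type*} [Group G] [DecidableEq G] [UniqueProds G]
    (C : Finset G) (h1C : (1 : G) ∈ C)
    (hC : ¬ ∀ x ∈ Subgroup.closure (C : Set G), ∀ y ∈ Subgroup.closure (C : Set G),
      x * y = y * x)
    (B : Finset G) (hB : 7 ≤ B.card) :
    B.card + C.card + 2 ≤ (B * C).card := by
  obtain ⟨B', -, hB', hle⟩ := UPG.exists_subset_card ⟨1, h1C⟩ hB
  have hne : ∃ d ∈ C, ∃ a ∈ C, ∃ b ∈ C, a * d⁻¹ * (b * d⁻¹) ≠ b * d⁻¹ * (a * d⁻¹) := by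
    by_contra! h
    refine hC fun x hx y hy ↦ UPG.closure_commute (fun u hu v hv ↦ ?_) hx hy
    simpa using h 1 h1C u hu v hv
  have := UPG.card_mul_ge_of_card_eq_seven hB' _ C rfl hne
  omega
end

section
/- Let G be a unique product group and C a finite subset of G containing the identity element such that |C| = 4 and the subgroup ⟨C⟩ generated by C is not abelian. Then κ₇(C) ≥ 6; that is, every finite subset X of G with |X| ≥ 7 satisfies |XC \ X| ≥ 6. -/
open Pointwise

/-!
The boundary `XC \ X` has `|XC| - |X|` elements, because `1 ∈ C`. Deleting from `X` the left factor
of a unique product of `XC` does not increase this number, so it suffices to exclude `|X| = 7` and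
`|XC| ≤ 12` (`exists_card_eq_seven`).

In that situation some two elements `x ≠ y` of `X` satisfy `|xC ∩ yC| ≥ 2`: there are only
`7 · 6 = 42` ordered pairs `x ≠ y`, whereas counting the coincidences `xc = yd` through the
multiplicities of the at most `12` products, at least two of which are unique, gives at least `44`
of them (`exists_two_coincidences`). Two coincidences `xc = yd`, `xe = yf` force
`y⁻¹x = dc⁻¹ = fe⁻¹`, so up to a right translation `C` is either `{1, a, a², b}` or
`{1, p, q, pq}`.

Both shapes are excluded by counting `a`-chains, the maximal right progressions
`y, ya, ya², …` inside a finite set; the number of chains is the number of their last elements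
(`ends`). If `Y` meets at most two left cosets of `⟨a⟩` and `b` does not commute with `a`, then right
multiplication by `b` either leads, inside `Y`, from one coset to the other in only one direction,
or never sends two consecutive elements `y`, `ya` into `Y`
(`one_way_or_sparse`). Either alternative bounds the number of `y` with `yb ∈ Y` by about half of
`|Y|`, which is incompatible with `|XC| ≤ 12`.
-/

namespace IsoperimetricSeven

variable {G : Type*} [Group G]

/-! ### Torsion-freeness and commutation -/

theorem eq_one_of_zpow_eq_one [UniqueProds G] {g : G} {n : ℤ} (hn : n ≠ 0) (h : g ^ n = 1) :
    g = 1 := by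
  classical
  have hfin : (Subgroup.zpowers g : Set G).Finite := by
    rw [finite_zpowers]
    exact isOfFinOrder_iff_zpow_eq_one.2 ⟨n, hn, h⟩
  -- In the finite subgroup `⟨g⟩` a unique product `a * b` also equals `(a * g) * (g⁻¹ * b)`.
  have hne : hfin.toFinset.Nonempty := ⟨1, by simp [one_mem]⟩
  obtain ⟨a, ha, b, hb, hu⟩ := UniqueProds.uniqueMul_of_nonempty hne hne
  simp only [Set.Finite.mem_toFinset, SetLike.mem_coe] at ha hb
  have hg := Subgroup.mem_zpowers g
  have := (hu (a := a * g) (b := g⁻¹ * b)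
    (by simpa using mul_mem ha hg) (by simpa using mul_mem (inv_mem hg) hb) (by group)).1
  simpa using this

/-- If `b` carries `⟨a⟩` to another coset and back again, then it can only carry two consecutive
elements of `⟨a⟩` into that coset when it commutes with `a`: here `f = b * a ^ k` has
`f² ∈ ⟨a⟩` and `f⁻¹ * a * f = a ^ m`, which leaves `m = ±1`, and `m = -1` would make `f²` equal
to its own inverse. -/
theorem commute_of_return [UniqueProds G] {a b : G} {m k l : ℤ}
    (h1 : a * b = b * a ^ m) (h2 : b * a ^ k * b = a ^ l) : a * b = b * a := by
  have hconj : ∀ n : ℤ, b⁻¹ * a ^ n * b = a ^ (m * n) := by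
    intro n
    have : b⁻¹ * a * b = a ^ m := by rw [mul_assoc, h1]; group
    rw [zpow_mul, ← this]
    simpa using (conj_zpow (a := b⁻¹) (b := a) (i := n)).symm
  have hb : b * a ^ k * b * a ^ k = a ^ (l + k) := by rw [h2, zpow_add]
  have hsq : a ^ (m * m) = a := by
    have e : (b * a ^ k * b * a ^ k)⁻¹ * a * (b * a ^ k * b * a ^ k) = a ^ (m * m) := by
      calc (b * a ^ k * b * a ^ k)⁻¹ * a * (b * a ^ k * b * a ^ k)
          = a ^ (-k) * (b⁻¹ * (a ^ (-k) * (b⁻¹ * a ^ (1 : ℤ) * b) * a ^ k) * b) * a ^ k := by group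
        _ = a ^ (m * m) := by
          rw [hconj, ← zpow_add, ← zpow_add, hconj, ← zpow_add, ← zpow_add]
          congr 1; ring
    rw [hb] at e
    rw [← e]; group
  have hm : a ^ (m * m - 1) = 1 := by rw [zpow_sub, hsq]; simp
  by_cases ha : a = 1
  · simp [ha]
  have hmm : m * m - 1 = 0 := by
    by_contra hne
    exact ha (eq_one_of_zpow_eq_one hne hm)
  have hm' : m = 1 ∨ m = -1 := mul_self_eq_one_iff.1 (by linarith)
  rcases hm' with rfl | rfl
  · simpa using h1
  · have e : a ^ (-1 * (l + k)) = a ^ (l + k) := by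
      rw [← hconj, ← hb]
      have : a ^ (-k) * (b⁻¹ * a ^ (l + k) * b) * a ^ k = b⁻¹ * a ^ (l + k) * b := by
        rw [hconj, ← zpow_add, ← zpow_add]; congr 1; ring
      rw [hb, ← this, ← hb]; group
    have e2 : a ^ (2 * (l + k)) = 1 := by
      rw [two_mul, zpow_add]; nth_rewrite 1 [← e]; rw [← zpow_add]; simp
    have hz : l + k = 0 := by
      by_contra hne
      exact ha (eq_one_of_zpow_eq_one (by omega) e2)
    have hf : b * a ^ k = 1 := by
      apply eq_one_of_zpow_eq_one (n := 2) (by norm_num)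
      rw [zpow_two, ← mul_assoc, hb, hz, zpow_zero]
    have : b = a ^ (-k) := by rw [zpow_neg]; exact eq_inv_of_mul_eq_one_left hf
    rw [this]
    exact ((Commute.refl a).zpow_right _).eq

theorem commute_of_mul_eq {a b x : G} {n : ℤ} (h : x * b = x * a ^ n) : a * b = b * a := by
  rw [mul_left_cancel h]
  exact ((Commute.refl a).zpow_right n).eq

variable [DecidableEq G]

/-! ### Chains -/

/-- The last elements of the maximal right progressions `y, y * a, y * a ^ 2, …` in `Y`. -/
def ends (a : G) (Y : Finset G) : Finset G := Y.filter fun y => y * a ∉ Y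

theorem exists_end [UniqueProds G] {a : G} (ha : a ≠ 1) {Y : Finset G} {y : G} (hy : y ∈ Y) :
    ∃ n : ℤ, y * a ^ n ∈ ends a Y := by
  by_contra! hno
  have hall : ∀ n : ℕ, y * a ^ n ∈ Y := by
    intro n
    induction n with
    | zero => simpa
    | succ n ih =>
      by_contra hn
      refine hno n ?_
      rw [ends, Finset.mem_filter, zpow_natCast, mul_assoc, ← pow_succ]
      exact ⟨ih, hn⟩
  have hinj : Function.Injective fun n : ℕ => y * a ^ n := by
    have : ¬ IsOfFinOrder a := fun h => by
      obtain ⟨n, hn, h⟩ := isOfFinOrder_iff_zpow_eq_one.1 h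
      exact ha (eq_one_of_zpow_eq_one hn h)
    exact (mul_right_injective y).comp (injective_pow_iff_not_isOfFinOrder.2 this)
  exact Set.infinite_of_injective_forall_mem hinj hall Y.finite_toSet

theorem ends_card_pos [UniqueProds G] {a : G} (ha : a ≠ 1) {Y : Finset G} (hY : Y.Nonempty) :
    1 ≤ (ends a Y).card := by
  obtain ⟨y, hy⟩ := hY
  obtain ⟨n, hn⟩ := exists_end ha hy
  exact Finset.card_pos.2 ⟨_, hn⟩

theorem card_union_image (a : G) (Y : Finset G) :
    (Y ∪ Y.image (· * a)).card = Y.card + (ends a Y).card := by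
  have h : Y ∪ Y.image (· * a) = Y ∪ (ends a Y).image (· * a) := by
    ext z
    simp only [ends, Finset.mem_union, Finset.mem_image, Finset.mem_filter]
    constructor
    · rintro (h | ⟨y, hy, rfl⟩)
      · exact Or.inl h
      · by_cases hz : y * a ∈ Y
        · exact Or.inl hz
        · exact Or.inr ⟨y, ⟨hy, hz⟩, rfl⟩
    · rintro (h | ⟨y, hy, rfl⟩)
      · exact Or.inl h
      · exact Or.inr ⟨y, hy.1, rfl⟩
  rw [h, Finset.card_union_of_disjoint, Finset.card_image_of_injective _ (mul_left_injective a)]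
  rw [Finset.disjoint_left]
  intro z hz hz'
  simp only [ends, Finset.mem_image, Finset.mem_filter] at hz'
  obtain ⟨y, hy, rfl⟩ := hz'
  exact hy.2 hz

/-- Prolonging every chain by one element does not create new chains. -/
theorem ends_union_image_card_le (a : G) (Y : Finset G) :
    (ends a (Y ∪ Y.image (· * a))).card ≤ (ends a Y).card := by
  rw [← Finset.card_image_of_injective (ends a Y) (mul_left_injective a)]
  apply Finset.card_le_card
  intro z hz
  simp only [ends, Finset.mem_image, Finset.mem_filter, Finset.mem_union, not_or] at hz ⊢
  obtain ⟨hz | ⟨y, hy, rfl⟩, h1, h2⟩ := hz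
  · exact absurd ⟨z, hz, rfl⟩ h2
  · exact ⟨y, ⟨hy, fun h => h2 ⟨_, h, rfl⟩⟩, rfl⟩

theorem card_ends_add (a : G) (Y : Finset G) :
    (Y.filter fun y => y * a ∈ Y).card + (ends a Y).card = Y.card :=
  Finset.card_filter_add_card_filter_not _

theorem exists_zpow_of_same_end {a x y e : G} {m n : ℤ} (hx : x * a ^ m = e) (hy : y * a ^ n = e) :
    ∃ k : ℤ, y = x * a ^ k := by
  refine ⟨m - n, ?_⟩
  rw [zpow_sub, ← mul_assoc, hx, ← hy]; group

theorem commute_of_one_chain [UniqueProds G] {a b : G} (ha : a ≠ 1) {Y : Finset G}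
    (hY : (ends a Y).card ≤ 1) {y : G} (hy : y ∈ Y) (hyb : y * b ∈ Y) : a * b = b * a := by
  obtain ⟨m, hm⟩ := exists_end ha hy
  obtain ⟨n, hn⟩ := exists_end ha hyb
  obtain ⟨k, hk⟩ := exists_zpow_of_same_end (Finset.card_le_one.1 hY _ hm _ hn) rfl
  exact commute_of_mul_eq hk

/-- Among three elements of a set with at most two chains, two lie in the same left coset of
`⟨a⟩`. -/
theorem exists_zpow_of_two_chains [UniqueProds G] {a : G} (ha : a ≠ 1) {Y : Finset G}
    (hY : (ends a Y).card ≤ 2) {x y z : G} (hx : x ∈ Y) (hy : y ∈ Y) (hz : z ∈ Y) :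
    (∃ k : ℤ, y = x * a ^ k) ∨ (∃ k : ℤ, z = x * a ^ k) ∨ ∃ k : ℤ, z = y * a ^ k := by
  obtain ⟨m, hm⟩ := exists_end ha hx
  obtain ⟨n, hn⟩ := exists_end ha hy
  obtain ⟨p, hp⟩ := exists_end ha hz
  by_contra! h
  have h1 : x * a ^ m ≠ y * a ^ n := fun e => by
    obtain ⟨k, hk⟩ := exists_zpow_of_same_end e rfl
    exact h.1 k hk
  have h2 : x * a ^ m ≠ z * a ^ p := fun e => by
    obtain ⟨k, hk⟩ := exists_zpow_of_same_end e rfl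
    exact h.2.1 k hk
  have h3 : y * a ^ n ≠ z * a ^ p := fun e => by
    obtain ⟨k, hk⟩ := exists_zpow_of_same_end e rfl
    exact h.2.2 k hk
  have : 2 < (ends a Y).card := Finset.two_lt_card.2 ⟨_, hm, _, hn, _, hp, h1, h2, h3⟩
  omega

/-- Inside a set `Y` with at most two `a`-chains, right multiplication by an element `b` that does
not commute with `a` either leads in only one direction between the two cosets of `⟨a⟩`, or is
nowhere defined at two consecutive elements. -/
theorem one_way_or_sparse [UniqueProds G] {a b : G} (hab : a * b ≠ b * a) {Y : Finset G}
    (hY : (ends a Y).card ≤ 2) :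
    (∀ s ∈ Y, s * b ∈ Y → ∀ s' ∈ Y, s' * b ∈ Y → ∀ n : ℤ, s * b ≠ s' * a ^ n) ∨
      ∀ y ∈ Y, y * b ∈ Y → y * a ∈ Y → y * a * b ∉ Y := by
  have ha : a ≠ 1 := by rintro rfl; simp at hab
  by_contra! h
  obtain ⟨⟨s, hs, hsb, s', hs', hsb', n, hn⟩, y, hy, hyb, hya, hyab⟩ := h
  -- `s * b` lies in the coset of `s'`; by the bound on chains, `s' * b` lies in that of `s`.
  obtain ⟨n', hn'⟩ : ∃ k : ℤ, s' * b = s * a ^ k := by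
    rcases exists_zpow_of_two_chains ha hY hs hs' hsb' with ⟨k, hk⟩ | h | ⟨k, hk⟩
    · rw [hk, mul_assoc, ← zpow_add] at hn
      exact absurd (commute_of_mul_eq hn) hab
    · exact h
    · exact absurd (commute_of_mul_eq hk) hab
  obtain ⟨m, hm⟩ : ∃ m : ℤ, y * a * b = y * b * a ^ m := by
    rcases exists_zpow_of_two_chains ha hY hy hyb hyab with ⟨k, hk⟩ | ⟨k, hk⟩ | h
    · exact absurd (commute_of_mul_eq hk) hab
    · have : y * a * b = y * a * a ^ (k - 1) := by
        rw [hk, mul_assoc y a, ← zpow_one_add]; congr 2; ring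
      exact absurd (commute_of_mul_eq this) hab
    · exact h
  have h1 : a * b = b * a ^ m := by
    apply mul_left_cancel (a := y)
    simpa only [mul_assoc] using hm
  -- Going from the coset of `y` to the one of `y * b` and back again.
  have h2 : ∃ k l : ℤ, b * a ^ k * b = a ^ l := by
    have hb : b = s⁻¹ * s' * a ^ n := by rw [mul_assoc, ← hn]; group
    refine ⟨-n, n', ?_⟩
    calc b * a ^ (-n) * b = (s⁻¹ * s' * a ^ n) * a ^ (-n) * b := by rw [← hb]
      _ = s⁻¹ * (s' * b) := by group
      _ = a ^ n' := by rw [hn']; group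
  obtain ⟨k, l, h2⟩ := h2
  exact hab (commute_of_return h1 h2)

/-- A subset of `X` without two consecutive elements: after each of its elements that does not
end a chain comes an element of the complement. -/
theorem two_mul_card_le_of_sparse {a : G} {X S : Finset G} (hSX : S ⊆ X)
    (h : ∀ y ∈ S, y * a ∉ S) : 2 * S.card ≤ X.card + (ends a X).card := by
  have h1 : (S.image (· * a)).card = S.card :=
    Finset.card_image_of_injective _ (mul_left_injective a)
  have h2 : Disjoint S (S.image (· * a)) := by
    rw [Finset.disjoint_right]
    intro z hz
    obtain ⟨y, hy, rfl⟩ := Finset.mem_image.1 hz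
    exact h y hy
  have h3 := Finset.card_le_card
    (Finset.union_subset_union hSX (Finset.image_subset_image (f := (· * a)) hSX))
  rw [Finset.card_union_of_disjoint h2, h1, card_union_image] at h3
  omega

/-! ### The two shapes of a four-element set -/

/-- The shape `{1, a, a², b}`. Each `a`-chain of `Y = X * {1, a, a²}` accounts for
two elements of `Y` beyond the seven of `X`. Hence there are at most two of them, and since `Z` has
at most `12` elements, right multiplication by `b` leads most of `X` into `Y`. -/
theorem commute_of_progression [UniqueProds G] {a b : G} (ha : a ≠ 1) {X Z : Finset G}
    (hX : X.card = 7) (hZ : Z.card ≤ 12)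
    (h : ∀ x ∈ X, x ∈ Z ∧ x * a ∈ Z ∧ x * a * a ∈ Z ∧ x * b ∈ Z) : a * b = b * a := by
  by_contra hab
  set X' := X ∪ X.image (· * a) with hX'
  set Y := X' ∪ X'.image (· * a) with hYdef
  have hXne : X.Nonempty := Finset.card_pos.1 (by omega)
  have hXX' : X ⊆ X' := Finset.subset_union_left
  have hX'Y : X' ⊆ Y := Finset.subset_union_left
  have hXa : ∀ x ∈ X, x * a ∈ Y := fun x hx =>
    hX'Y (Finset.mem_union_right _ (Finset.mem_image_of_mem _ hx))
  have hYZ : Y ⊆ Z := by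
    intro z hz
    simp only [hYdef, hX', Finset.mem_union, Finset.mem_image] at hz
    rcases hz with (hz | ⟨x, hx, rfl⟩) | ⟨y, hy | ⟨x, hx, rfl⟩, rfl⟩
    · exact (h z hz).1
    · exact (h x hx).2.1
    · exact (h y hy).2.1
    · exact (h x hx).2.2.1
  have c1 : X'.card = X.card + (ends a X).card := card_union_image a X
  have c2 : Y.card = X'.card + (ends a X').card := card_union_image a X'
  have c3 : (ends a X').card ≤ (ends a X).card := ends_union_image_card_le a X
  have c4 : (ends a Y).card ≤ (ends a X').card := ends_union_image_card_le a X'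
  have c5 := Finset.card_le_card hYZ
  have c6 := ends_card_pos ha (hXne.mono hXX')
  set S := X.filter fun x => x * b ∈ Y with hS
  have hSX : S ⊆ X := Finset.filter_subset _ _
  have c7 : (X \ S).card ≤ (Z \ Y).card := by
    rw [← Finset.card_image_of_injective (X \ S) (mul_left_injective b)]
    apply Finset.card_le_card
    intro z hz
    obtain ⟨x, hx, rfl⟩ := Finset.mem_image.1 hz
    simp only [hS, Finset.mem_sdiff, Finset.mem_filter, not_and] at hx ⊢
    exact ⟨(h x hx.1).2.2.2, hx.2 hx.1⟩
  rw [Finset.card_sdiff_of_subset hSX, Finset.card_sdiff_of_subset hYZ] at c7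
  have hSne : S.Nonempty := Finset.card_pos.1 (by omega)
  have hmem : ∀ s ∈ S, s ∈ Y ∧ s * b ∈ Y := fun s hs =>
    ⟨hX'Y (hXX' (hSX hs)), (Finset.mem_filter.1 hs).2⟩
  by_cases hone : (ends a Y).card ≤ 1
  · obtain ⟨s, hs⟩ := hSne
    exact hab (commute_of_one_chain ha hone (hmem s hs).1 (hmem s hs).2)
  rcases one_way_or_sparse hab (Y := Y) (by omega) with hw | hw
  · -- `S ∪ S * a` and `S * b` are disjoint subsets of `Y`.
    have d : Disjoint (S ∪ S.image (· * a)) (S.image (· * b)) := by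
      rw [Finset.disjoint_right]
      intro z hz hz'
      obtain ⟨s, hs, rfl⟩ := Finset.mem_image.1 hz
      rcases Finset.mem_union.1 hz' with hz' | hz'
      · exact hw s (hmem s hs).1 (hmem s hs).2 _ (hmem _ hz').1 (hmem _ hz').2 0 (by simp)
      · obtain ⟨s', hs', he⟩ := Finset.mem_image.1 hz'
        exact hw s (hmem s hs).1 (hmem s hs).2 _ (hmem _ hs').1 (hmem _ hs').2 1 (by simp [← he])
    have hsub : (S ∪ S.image (· * a)) ∪ S.image (· * b) ⊆ Y := by
      intro z hz
      simp only [Finset.mem_union, Finset.mem_image] at hz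
      rcases hz with (hz | ⟨s, hs, rfl⟩) | ⟨s, hs, rfl⟩
      · exact (hmem z hz).1
      · exact hXa s (hSX hs)
      · exact (hmem s hs).2
    have c8 := Finset.card_le_card hsub
    rw [Finset.card_union_of_disjoint d, card_union_image,
      Finset.card_image_of_injective _ (mul_left_injective b)] at c8
    have c9 := ends_card_pos ha hSne
    omega
  · have c8 := two_mul_card_le_of_sparse (a := a) hSX fun y hy hya =>
      hw y (hmem y hy).1 (hmem y hy).2 (hmem _ hya).1 (hmem _ hya).2
    omega

/-- In a set with at most two `a`-chains, right multiplication by `b` has at most about half of the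
set as its domain. -/
theorem card_domain_le [UniqueProds G] {a b : G} (hab : a * b ≠ b * a) {Y : Finset G}
    (hY : (ends a Y).card ≤ 2) :
    2 * (Y.filter fun y => y * b ∈ Y).card ≤ Y.card + (ends a Y).card := by
  set S := Y.filter fun y => y * b ∈ Y with hS
  have hmem : ∀ s ∈ S, s ∈ Y ∧ s * b ∈ Y := fun s hs => Finset.mem_filter.1 hs
  rcases one_way_or_sparse hab hY with hw | hw
  · have d : Disjoint S (S.image (· * b)) := by
      rw [Finset.disjoint_right]
      intro z hz hz'
      obtain ⟨s, hs, rfl⟩ := Finset.mem_image.1 hz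
      exact hw s (hmem s hs).1 (hmem s hs).2 _ (hmem _ hz').1 (hmem _ hz').2 0 (by simp)
    have hsub : S ∪ S.image (· * b) ⊆ Y := by
      intro z hz
      simp only [Finset.mem_union, Finset.mem_image] at hz
      rcases hz with hz | ⟨s, hs, rfl⟩
      · exact (hmem z hz).1
      · exact (hmem s hs).2
    have c := Finset.card_le_card hsub
    rw [Finset.card_union_of_disjoint d,
      Finset.card_image_of_injective _ (mul_left_injective b)] at c
    omega
  · exact two_mul_card_le_of_sparse (Finset.filter_subset _ _) fun y hy hya =>
      hw y (hmem y hy).1 (hmem y hy).2 (hmem _ hya).1 (hmem _ hya).2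

/-- The shape `{1, p, q, p * q} = {1, p} * {1, q}`. With `Y = X * {1, p}`, the set `Y` has few
`p`-chains or few `q`-chains, since each chain costs one element of `X * {1, p} * {1, q}`. -/
theorem commute_of_product [UniqueProds G] {p q : G} {X Z : Finset G}
    (hX : X.card = 7) (hZ : Z.card ≤ 12)
    (h : ∀ x ∈ X, x ∈ Z ∧ x * p ∈ Z ∧ x * q ∈ Z ∧ x * p * q ∈ Z) : p * q = q * p := by
  by_contra hpq
  have hp : p ≠ 1 := by rintro rfl; simp at hpq
  have hq : q ≠ 1 := by rintro rfl; simp at hpq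
  set Y := X ∪ X.image (· * p) with hYdef
  have hXne : X.Nonempty := Finset.card_pos.1 (by omega)
  have hYne : Y.Nonempty := hXne.mono Finset.subset_union_left
  have hYZ : Y ∪ Y.image (· * q) ⊆ Z := by
    intro z hz
    simp only [hYdef, Finset.mem_union, Finset.mem_image] at hz
    rcases hz with (hz | ⟨x, hx, rfl⟩) | ⟨y, hy | ⟨x, hx, rfl⟩, rfl⟩
    · exact (h z hz).1
    · exact (h x hx).2.1
    · exact (h y hy).2.2.1
    · exact (h x hx).2.2.2
  have c1 : Y.card = X.card + (ends p X).card := card_union_image p X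
  have c2 := Finset.card_le_card hYZ
  rw [card_union_image] at c2
  have c3 : (ends p Y).card ≤ (ends p X).card := ends_union_image_card_le p X
  have c4 := ends_card_pos hp hYne
  have c5 := ends_card_pos hq hYne
  have c6 := card_ends_add p Y
  have c7 := card_ends_add q Y
  by_cases ht : (ends p Y).card ≤ 2 ∧ (ends p X).card ≤ 2
  · by_cases ht1 : (ends p Y).card ≤ 1
    · obtain ⟨y, hy⟩ : (Y.filter fun y => y * q ∈ Y).Nonempty := Finset.card_pos.1 (by omega)
      obtain ⟨hy, hyq⟩ := Finset.mem_filter.1 hy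
      exact hpq (commute_of_one_chain hp ht1 hy hyq)
    · have c8 := card_domain_le hpq ht.1
      omega
  · by_cases hs1 : (ends q Y).card ≤ 1
    · obtain ⟨y, hy⟩ : (Y.filter fun y => y * p ∈ Y).Nonempty := Finset.card_pos.1 (by omega)
      obtain ⟨hy, hyq⟩ := Finset.mem_filter.1 hy
      exact hpq (commute_of_one_chain hq hs1 hy hyq).symm
    · have c8 := card_domain_le (Ne.symm hpq) (Y := Y) (by omega)
      omega

/-! ### Reduction to seven elements and double counting -/

/-- Deleting the left factor of a unique product removes at least one element of `X * C`. -/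
theorem exists_card_eq_seven [UniqueProds G] {C : Finset G} (hC : C.Nonempty) (n : ℕ) :
    ∀ X : Finset G, X.card = 7 + n → (X * C).card ≤ 12 + n →
      ∃ X' : Finset G, X'.card = 7 ∧ (X' * C).card ≤ 12 := by
  induction n with
  | zero => exact fun X h1 h2 => ⟨X, h1, h2⟩
  | succ n ih =>
    intro X h1 h2
    obtain ⟨x, hx, c, hc, hu⟩ := UniqueProds.uniqueMul_of_nonempty
      (A := X) (Finset.card_pos.1 (by omega)) hC
    apply ih (X.erase x)
    · rw [Finset.card_erase_of_mem hx]; omega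
    · have : X.erase x * C ⊆ (X * C).erase (x * c) := by
        intro z hz
        obtain ⟨y, hy, d, hd, rfl⟩ := Finset.mem_mul.1 hz
        obtain ⟨hyx, hy⟩ := Finset.mem_erase.1 hy
        exact Finset.mem_erase.2
          ⟨fun he => hyx (hu hy hd he).1, Finset.mul_mem_mul hy hd⟩
      have := Finset.card_le_card this
      rw [Finset.card_erase_of_mem (Finset.mul_mem_mul hx hc)] at this
      omega

theorem card_fiber_eq_one {A B : Finset G} {p : G × G} (hp : p ∈ A ×ˢ B)
    (h : UniqueMul A B p.1 p.2) :
    ((A ×ˢ B).filter fun r => r.1 * r.2 = p.1 * p.2).card = 1 := by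
  rw [Finset.card_eq_one]
  refine ⟨p, ?_⟩
  ext r
  simp only [Finset.mem_filter, Finset.mem_singleton]
  constructor
  · rintro ⟨hr, he⟩
    obtain ⟨h1, h2⟩ := Finset.mem_product.1 hr
    exact Prod.ext_iff.2 (h h1 h2 he)
  · rintro rfl
    exact ⟨hp, rfl⟩

/-- Double counting of the coincidences `x * c = y * d`. -/
theorem exists_two_coincidences [UniqueProds G] {X C : Finset G} (hX : X.card = 7)
    (hC : C.card = 4) (hXC : (X * C).card ≤ 12) :
    ∃ x y c d e f : G, x ≠ y ∧ c ∈ C ∧ d ∈ C ∧ e ∈ C ∧ f ∈ C ∧ c ≠ e ∧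
      x * c = y * d ∧ x * e = y * f := by
  by_contra hno
  push Not at hno
  set r : G → ℕ := fun z => ((X ×ˢ C).filter fun p => p.1 * p.2 = z).card with hr
  have hmaps : ∀ p ∈ X ×ˢ C, p.1 * p.2 ∈ X * C := fun p hp =>
    Finset.mul_mem_mul (Finset.mem_product.1 hp).1 (Finset.mem_product.1 hp).2
  have hsum : ∑ z ∈ X * C, r z = 28 := by
    rw [← Finset.card_eq_sum_card_fiberwise hmaps, Finset.card_product, hX, hC]
  have hlower : 72 ≤ ∑ z ∈ X * C, r z ^ 2 := by
    have := UniqueProds.toTwoUniqueProds_of_group (G := G)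
    obtain ⟨p, hp, p', hp', hne, hu, hu'⟩ := TwoUniqueProds.uniqueMul_of_one_lt_card
      (A := X) (B := C) (by rw [hX, hC]; norm_num)
    have hmem := hmaps p hp
    have hmem' := hmaps p' hp'
    have hpp : p.1 * p.2 ≠ p'.1 * p'.2 := fun he =>
      hne (Prod.ext_iff.2 (hu' (Finset.mem_product.1 hp).1 (Finset.mem_product.1 hp).2 he))
    set T : Finset G := {p.1 * p.2, p'.1 * p'.2} with hT
    have hTsub : T ⊆ X * C := by
      intro z hz
      simp only [hT, Finset.mem_insert, Finset.mem_singleton] at hz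
      rcases hz with rfl | rfl <;> assumption
    -- `(r - 2) * (r - 3) ≥ 0` for every natural number `r`, and it equals `2` for `r = 1`.
    have hpt : ∀ z ∈ X * C, 5 * r z + (if z ∈ T then 2 else 0) ≤ r z ^ 2 + 6 := by
      intro z _
      split_ifs with hz
      · have : r z = 1 := by
          simp only [hT, Finset.mem_insert, Finset.mem_singleton] at hz
          rcases hz with rfl | rfl
          · exact card_fiber_eq_one hp hu
          · exact card_fiber_eq_one hp' hu'
        rw [this]; norm_num
      · rcases Nat.lt_or_ge (r z) 3 with h | h
        · interval_cases r z <;> norm_num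
        · nlinarith
    have := Finset.sum_le_sum hpt
    rw [Finset.sum_add_distrib, Finset.sum_add_distrib, ← Finset.mul_sum, hsum,
      Finset.sum_ite_mem, Finset.inter_eq_right.2 hTsub, Finset.sum_const, Finset.sum_const,
      hT, Finset.card_pair hpp, smul_eq_mul, smul_eq_mul] at this
    omega
  have hupper : ∑ z ∈ X * C, r z ^ 2 ≤ 70 := by
    rw [hr, ← Finset.mulEnergy_eq_sum_sq', Finset.mulEnergy]
    rw [← Finset.card_filter_add_card_filter_not (fun t : (G × G) × G × G => t.1.1 = t.1.2)]
    have h1 : ((((X ×ˢ X) ×ˢ C ×ˢ C).filter fun t => t.1.1 * t.2.1 = t.1.2 * t.2.2).filter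
        fun t => t.1.1 = t.1.2).card ≤ (X ×ˢ C).card := by
      apply Finset.card_le_card_of_injOn (fun t => (t.1.1, t.2.1))
      · rintro ⟨⟨x, y⟩, c, d⟩ ht
        simp at ht ⊢
        tauto
      · rintro ⟨⟨x, y⟩, c, d⟩ ht ⟨⟨x', y'⟩, c', d'⟩ ht' he
        simp at ht ht' he ⊢
        obtain ⟨⟨_, h1⟩, rfl⟩ := ht
        obtain ⟨⟨_, h2⟩, rfl⟩ := ht'
        obtain ⟨rfl, rfl⟩ := he
        exact ⟨⟨rfl, rfl⟩, rfl, (mul_left_cancel h1).symm.trans (mul_left_cancel h2)⟩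
    have h2 : ((((X ×ˢ X) ×ˢ C ×ˢ C).filter fun t => t.1.1 * t.2.1 = t.1.2 * t.2.2).filter
        fun t => ¬ t.1.1 = t.1.2).card ≤ X.offDiag.card := by
      apply Finset.card_le_card_of_injOn (fun t => (t.1.1, t.1.2))
      · rintro ⟨⟨x, y⟩, c, d⟩ ht
        simp at ht ⊢
        tauto
      · rintro ⟨⟨x, y⟩, c, d⟩ ht ⟨⟨x', y'⟩, c', d'⟩ ht' he
        simp at ht ht' he ⊢
        obtain ⟨rfl, rfl⟩ := he
        obtain ⟨⟨⟨-, hc, hd⟩, h1⟩, hxy⟩ := ht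
        obtain ⟨⟨⟨-, hc', hd'⟩, h2⟩, -⟩ := ht'
        have hcc : c = c' := by
          by_contra hcc
          exact hno x y c d c' d' hxy hc hd hc' hd' hcc h1 h2
        subst hcc
        exact ⟨⟨rfl, rfl⟩, rfl, mul_left_cancel (h1.symm.trans h2)⟩
    rw [Finset.card_product, hX, hC] at h1
    rw [Finset.offDiag_card, hX] at h2
    omega
  omega

/-! ### Undoing the translation -/

/-- If `1 ∈ C` and the elements of a right translate `C * h` commute, then those of `C` commute. -/
theorem commute_of_translate {C : Finset G} (h1 : (1 : G) ∈ C) {h : G}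
    (hc : ∀ u ∈ C, ∀ v ∈ C, (u * h) * (v * h) = (v * h) * (u * h)) :
    ∀ u ∈ C, ∀ v ∈ C, u * v = v * u := by
  have hh : ∀ v ∈ C, h * v = v * h := by
    intro v hv
    have := hc 1 h1 v hv
    rw [one_mul, ← mul_assoc] at this
    exact mul_right_cancel this
  intro u hu v hv
  have := hc u hu v hv
  rw [← mul_assoc, ← mul_assoc, mul_assoc u, mul_assoc v, hh v hv, hh u hu, ← mul_assoc,
    ← mul_assoc] at this
  exact mul_right_cancel (mul_right_cancel this)

/-- `C` contains the three-term progression `c, a * c, a ^ 2 * c` with `a = d * c⁻¹`. -/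
theorem commute_of_three_term [UniqueProds G] {X C : Finset G} (h1C : (1 : G) ∈ C)
    (hC : C.card = 4) (hX : X.card = 7) (hXC : (X * C).card ≤ 12) {c d f : G} (hc : c ∈ C)
    (hd : d ∈ C) (hf : f ∈ C) (hcd : c ≠ d) (he : d * c⁻¹ * d = f) :
    ∀ u ∈ C, ∀ v ∈ C, u * v = v * u := by
  set a := d * c⁻¹ with ha
  have ha1 : a ≠ 1 := fun h => hcd (mul_inv_eq_one.1 h).symm
  have hdc : d = a * c := by simp [ha]
  have hdf : d ≠ f := by
    rintro h
    exact ha1 (mul_eq_right.1 (he.trans h.symm))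
  have hcf : c ≠ f := by
    rintro rfl
    have : a * a = 1 := by
      rw [hdc, ← mul_assoc] at he
      exact mul_eq_right.1 he
    exact ha1 (eq_one_of_zpow_eq_one (n := 2) (by norm_num) (by rw [zpow_two, this]))
  have h3 : ({c, d, f} : Finset G).card = 3 := Finset.card_eq_three.2 ⟨c, d, f, hcd, hcf, hdf, rfl⟩
  have hsub : ({c, d, f} : Finset G) ⊆ C := by
    intro z hz
    simp only [Finset.mem_insert, Finset.mem_singleton] at hz
    rcases hz with rfl | rfl | rfl <;> assumption
  obtain ⟨g, hg⟩ := Finset.card_eq_one.1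
    (show (C \ {c, d, f}).card = 1 by rw [Finset.card_sdiff_of_subset hsub]; omega)
  have hgC : g ∈ C := (Finset.mem_sdiff.1 (hg ▸ Finset.mem_singleton_self g)).1
  have hcomm : a * (g * c⁻¹) = (g * c⁻¹) * a := by
    apply commute_of_progression ha1 (X := X) (Z := (X * C).image (· * c⁻¹)) hX
      (Finset.card_image_le.trans hXC)
    have hm : ∀ x ∈ X, ∀ u ∈ C, x * (u * c⁻¹) ∈ (X * C).image (· * c⁻¹) := fun x hx u hu =>
      Finset.mem_image.2 ⟨x * u, Finset.mul_mem_mul hx hu, mul_assoc _ _ _⟩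
    intro x hx
    refine ⟨by simpa using hm x hx c hc, hm x hx d hd, ?_, hm x hx g hgC⟩
    have : x * a * a = x * (f * c⁻¹) := by rw [← he, ha]; group
    rw [this]
    exact hm x hx f hf
  have hcases : ∀ u ∈ C, u * c⁻¹ = 1 ∨ u * c⁻¹ = a ∨ u * c⁻¹ = a * a ∨ u * c⁻¹ = g * c⁻¹ := by
    intro u hu
    by_cases h : u ∈ ({c, d, f} : Finset G)
    · simp only [Finset.mem_insert, Finset.mem_singleton] at h
      rcases h with rfl | rfl | rfl
      · simp
      · exact Or.inr (Or.inl rfl)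
      · exact Or.inr (Or.inr (Or.inl (by rw [← he, ha]; group)))
    · have : u ∈ C \ {c, d, f} := Finset.mem_sdiff.2 ⟨hu, h⟩
      rw [hg, Finset.mem_singleton] at this
      exact Or.inr (Or.inr (Or.inr (by rw [this])))
  have hk : Commute a (g * c⁻¹) := hcomm
  have hk2 : Commute (a * a) (g * c⁻¹) := hk.mul_left hk
  have hk3 : Commute (a * a) a := (Commute.refl a).mul_left (Commute.refl a)
  apply commute_of_translate h1C (h := c⁻¹)
  intro u hu v hv
  change Commute _ _
  rcases hcases u hu with h | h | h | h <;> rcases hcases v hv with h' | h' | h' | h' <;>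
    rw [h, h'] <;>
    first
    | exact Commute.refl _
    | exact Commute.one_left _
    | exact Commute.one_right _
    | assumption
    | (apply Commute.symm; assumption)

/-- `C * c⁻¹ = {1, p, q, p * q}` with `p = d * c⁻¹` and `q = e * c⁻¹`. -/
theorem commute_of_four_term [UniqueProds G] {X C : Finset G} (h1C : (1 : G) ∈ C)
    (hX : X.card = 7) (hXC : (X * C).card ≤ 12) {c d e f : G} (hCeq : C = {c, d, e, f})
    (he : d * c⁻¹ * e = f) : ∀ u ∈ C, ∀ v ∈ C, u * v = v * u := by
  have hc : c ∈ C := by simp [hCeq]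
  have hd : d ∈ C := by simp [hCeq]
  have heC : e ∈ C := by simp [hCeq]
  have hf : f ∈ C := by simp [hCeq]
  set p := d * c⁻¹ with hp
  set q := e * c⁻¹ with hq
  have hfc : f * c⁻¹ = p * q := by rw [← he, hq]; group
  have hcomm : p * q = q * p := by
    apply commute_of_product (X := X) (Z := (X * C).image (· * c⁻¹)) hX
      (Finset.card_image_le.trans hXC)
    have hm : ∀ x ∈ X, ∀ u ∈ C, x * (u * c⁻¹) ∈ (X * C).image (· * c⁻¹) := fun x hx u hu =>
      Finset.mem_image.2 ⟨x * u, Finset.mul_mem_mul hx hu, mul_assoc _ _ _⟩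
    intro x hx
    refine ⟨by simpa using hm x hx c hc, hm x hx d hd, hm x hx e heC, ?_⟩
    rw [mul_assoc, ← hfc]
    exact hm x hx f hf
  have hcases : ∀ u ∈ C, u * c⁻¹ = 1 ∨ u * c⁻¹ = p ∨ u * c⁻¹ = q ∨ u * c⁻¹ = p * q := by
    intro u hu
    rw [hCeq] at hu
    simp only [Finset.mem_insert, Finset.mem_singleton] at hu
    rcases hu with rfl | rfl | rfl | rfl
    · simp
    · exact Or.inr (Or.inl rfl)
    · exact Or.inr (Or.inr (Or.inl rfl))
    · exact Or.inr (Or.inr (Or.inr hfc))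
  have hk : Commute p q := hcomm
  have hk1 : Commute (p * q) p := (Commute.refl p).mul_left hk.symm
  have hk2 : Commute (p * q) q := hk.mul_left (Commute.refl q)
  apply commute_of_translate h1C (h := c⁻¹)
  intro u hu v hv
  change Commute _ _
  rcases hcases u hu with h | h | h | h <;> rcases hcases v hv with h' | h' | h' | h' <;>
    rw [h, h'] <;>
    first
    | exact Commute.refl _
    | exact Commute.one_left _
    | exact Commute.one_right _
    | assumption
    | (apply Commute.symm; assumption)

theorem commute_of_card_seven [UniqueProds G] {X C : Finset G} (h1C : (1 : G) ∈ C)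
    (hC : C.card = 4) (hX : X.card = 7) (hXC : (X * C).card ≤ 12) :
    ∀ u ∈ C, ∀ v ∈ C, u * v = v * u := by
  obtain ⟨x, y, c, d, e, f, hxy, hc, hd, he, hf, hce, h1, h2⟩ := exists_two_coincidences hX hC hXC
  have hcd : c ≠ d := by rintro rfl; exact hxy (mul_right_cancel h1)
  have hef : e ≠ f := by rintro rfl; exact hxy (mul_right_cancel h2)
  have hdf : d ≠ f := by rintro rfl; exact hce (mul_left_cancel (h1.trans h2.symm))
  -- Both sides equal `y⁻¹ * x * e`.
  have hrel : d * c⁻¹ * e = f := by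
    have e1 : d = y⁻¹ * (x * c) := by rw [h1]; group
    have e2 : f = y⁻¹ * (x * e) := by rw [h2]; group
    rw [e1, e2]; group
  by_cases hcf : c = f
  · subst hcf
    refine commute_of_three_term h1C hC hX hXC he hc hd hce.symm ?_
    have : d = c * e⁻¹ * c := by
      calc d = d * c⁻¹ * e * e⁻¹ * c := by group
        _ = c * e⁻¹ * c := by rw [hrel]
    exact this.symm
  by_cases hde : d = e
  · subst hde
    exact commute_of_three_term h1C hC hX hXC hc hd hf hcd hrel
  refine commute_of_four_term h1C hX hXC (c := c) (d := d) (e := e) (f := f) ?_ hrel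
  symm
  apply Finset.eq_of_subset_of_card_le
  · intro z hz
    simp only [Finset.mem_insert, Finset.mem_singleton] at hz
    rcases hz with rfl | rfl | rfl | rfl <;> assumption
  · rw [hC, Finset.card_insert_of_notMem (by simp [hcd, hce, hcf]),
      Finset.card_insert_of_notMem (by simp [hde, hdf]), Finset.card_pair hef]

end IsoperimetricSeven

/-- Let `G` be a unique product group and `C` a finite subset of `G`
containing the identity with `|C| = 4` whose generated subgroup is not abelian. Then
`κ₇(C) ≥ 6`: every finite subset `X` of `G` with `|X| ≥ 7` satisfies `|XC \ X| ≥ 6`. -/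
theorem isoperimetric_seven_ge_six {G : Type*} [Group G] [DecidableEq G] [UniqueProds G]
    (C : Finset G) (h1C : (1 : G) ∈ C) (hC4 : C.card = 4)
    (hab : ¬ ∀ u ∈ Subgroup.closure (C : Set G), ∀ v ∈ Subgroup.closure (C : Set G),
      u * v = v * u)
    (X : Finset G) (hX : 7 ≤ X.card) :
    6 ≤ ((X * C) \ X).card := by
  by_contra hlt
  have hXC : X ⊆ X * C := fun x hx => by simpa using Finset.mul_mem_mul hx h1C
  rw [Finset.card_sdiff_of_subset hXC] at hlt
  have hle := Finset.card_le_card hXC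
  obtain ⟨X', hX', hXC'⟩ := IsoperimetricSeven.exists_card_eq_seven ⟨1, h1C⟩ (X.card - 7) X
    (by omega) (by omega)
  have hcomm := IsoperimetricSeven.commute_of_card_seven h1C hC4 hX' hXC'
  apply hab
  have := Subgroup.isMulCommutative_closure (k := (C : Set G)) hcomm
  intro u hu v hv
  exact setLike_mul_comm hu hv
end
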